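/- arXiv:2005.06384 — 8 statements merged into one kernel-verified Lean document; each statement's English description precedes it below -/
import Mathlib

section
/- Let a be a real number with -1 < a < 1 and a ≠ 0. Then for every real x > 0, Γ(a,x) < G_a(x), i.e. ∫_x^∞ t^(a-1) e^(-t) dt < ((x+b_a)^a − x^a) e^(−x)/(a b_a). -/
/-!
Put `b = b_a`. After the shift `t = x + s` and division by `e^{-x}`, the claim says that
`(x+s)^(a-1)` has a smaller mean when `s` is exponentially distributed than when `s` is uniform
on `(0,b)`. Let `q(s) = (1/b) 1_{s<b} - e^{-s}` be the difference of the two densities; the claim is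
`∫ (x+s)^(a-1) q(s) ds > 0`. It is enough to find `ℓ` with `∫ ℓ q = 0` such that `(x+s)^(a-1) - ℓ(s)`
and `q(s)` have the same sign (`exp_mean_lt_uniform_mean_of_line`).

* If `b ≤ 1` (in particular if `a < 0`, since `Γ ≥ 1` on `(0,1)`), then `q` changes sign only at
  `b`, and the constant `ℓ = (x+b)^(a-1)` works because `(x+s)^(a-1)` is decreasing.
* If `b > 1`, then `a > 0` and `q` has signs `-, +, -`, with changes at `log b` and `b`. The equation
  `b^(a-1) = Γ(a+1)` says exactly that `∫ s^(a-1) q(s) ds = 0`. As a function of `w = s^(a-1)`,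
  `(x+s)^(a-1)` is strictly concave (`strictConcaveOn_shift`), so `ℓ = α + β w`, the chord through the
  points with `s = log b` and `s = b`, has the required signs (`chord_signs`).
-/

open Real Filter Set

/-- Upper incomplete gamma function `Γ(a,x) = ∫_x^∞ t^(a-1) e^(-t) dt`. -/
noncomputable def incGamma (a x : ℝ) : ℝ := ∫ t in Set.Ioi x, t ^ (a - 1) * Real.exp (-t)

/-- `b_a = Γ(a+1)^(1/(a-1))` for `a ≠ 1`, and `b_1 = e^(1-γ)`. -/
noncomputable def bCoef (a : ℝ) : ℝ :=
  if a = 1 then Real.exp (1 - Real.eulerMascheroniConstant)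
  else Real.Gamma (a + 1) ^ (1 / (a - 1))

/-- `G_a(x) = ((x+b_a)^a - x^a) e^(-x) / (a b_a)`. -/
noncomputable def Gbound (a x : ℝ) : ℝ :=
  ((x + bCoef a) ^ a - x ^ a) * Real.exp (-x) / (a * bCoef a)

/-- `g_a(x) = (((x+2)^a - x^a - 2^a)/(2a) + Γ(a)) e^(-x)`. -/
noncomputable def gbound (a x : ℝ) : ℝ :=
  (((x + 2) ^ a - x ^ a - (2 : ℝ) ^ a) / (2 * a) + Real.Gamma a) * Real.exp (-x)

/-- `g_a^lo(x) = x^a e^(-x) (x-a-1) / ((x-a)^2 + a)`. -/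
noncomputable def gLo (a x : ℝ) : ℝ :=
  x ^ a * Real.exp (-x) * (x - a - 1) / ((x - a) ^ 2 + a)

/-- `g_a^hi(x) = x^a e^(-x) / (x-a)`. -/
noncomputable def gHi (a x : ℝ) : ℝ := x ^ a * Real.exp (-x) / (x - a)

open MeasureTheory

/-- Sign-pattern comparison: if `ψ` has the sign of `1/b - e^{-s}` on `(0,b]` and is negative beyond
`b`, its mean against the exponential law is smaller than its mean against the uniform law on
`(0,b)`. -/
lemma exp_mean_lt_uniform_mean {b : ℝ} (hb : 0 < b) {ψ : ℝ → ℝ}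
    (h1 : IntegrableOn ψ (Ioc 0 b)) (h2 : IntegrableOn (fun s => ψ s * exp (-s)) (Ioi 0))
    (hs : ∀ s ∈ Ioc 0 b, 0 ≤ ψ s * (1 / b - exp (-s))) (hneg : ∀ s, b < s → ψ s < 0) :
    ∫ s in Ioi 0, ψ s * exp (-s) < 1 / b * ∫ s in Ioc 0 b, ψ s := by
  have hsub : IntegrableOn (fun s => ψ s * exp (-s)) (Ioc 0 b) :=
    h2.mono_set Ioc_subset_Ioi_self
  have hsub2 : IntegrableOn (fun s => ψ s * exp (-s)) (Ioi b) :=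
    h2.mono_set (Ioi_subset_Ioi hb.le)
  rw [← Ioc_union_Ioi_eq_Ioi hb.le,
    setIntegral_union (Set.Ioc_disjoint_Ioi le_rfl) measurableSet_Ioi hsub hsub2,
    ← integral_const_mul]
  have hA : ∫ s in Ioc 0 b, ψ s * exp (-s) ≤ ∫ s in Ioc 0 b, 1 / b * ψ s := by
    refine setIntegral_mono_on hsub (h1.const_mul _) measurableSet_Ioc fun s hs' => ?_
    have := hs s hs'
    linarith [mul_sub (ψ s) (1 / b) (exp (-s)), mul_comm (ψ s) (1 / b)]
  have hB : 0 < ∫ s in Ioi b, -(ψ s * exp (-s)) := by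
    have hpos : ∀ s ∈ Ioi b, 0 < -(ψ s * exp (-s)) := fun s hs' => by
      have := mul_neg_of_neg_of_pos (hneg s hs') (exp_pos (-s))
      linarith
    rw [setIntegral_pos_iff_support_of_nonneg_ae]
    · have : Function.support (fun s => -(ψ s * exp (-s))) ∩ Ioi b = Ioi b :=
        inter_eq_right.2 fun s hs' => (hpos s hs').ne'
      rw [this]; simp
    · filter_upwards [ae_restrict_mem measurableSet_Ioi] with s hs'
      exact (hpos s hs').le
    · exact hsub2.neg
  rw [integral_neg] at hB
  linarith

/-- The comparison for `f` follows from that for `f - α - β w`, because constants and `w` have the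
same mean under both laws. -/
lemma exp_mean_lt_uniform_mean_of_line {b : ℝ} (hb : 0 < b) {f w : ℝ → ℝ} (α β : ℝ)
    (hf1 : IntegrableOn f (Ioc 0 b)) (hf2 : IntegrableOn (fun s => f s * exp (-s)) (Ioi 0))
    (hw1 : IntegrableOn w (Ioc 0 b)) (hw2 : IntegrableOn (fun s => w s * exp (-s)) (Ioi 0))
    (hw : ∫ s in Ioi 0, w s * exp (-s) = 1 / b * ∫ s in Ioc 0 b, w s)
    (hs : ∀ s ∈ Ioc 0 b, 0 ≤ (f s - α - β * w s) * (1 / b - exp (-s)))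
    (hneg : ∀ s, b < s → f s - α - β * w s < 0) :
    ∫ s in Ioi 0, f s * exp (-s) < 1 / b * ∫ s in Ioc 0 b, f s := by
  have hc1 : IntegrableOn (fun _ : ℝ => α) (Ioc 0 b) := by
    simp [integrableOn_const_iff]
  have he : IntegrableOn (fun s : ℝ => exp (-s)) (Ioi 0) := by
    simpa using exp_neg_integrableOn_Ioi 0 one_pos
  have heq : (fun s => (f s - α - β * w s) * exp (-s)) =
      fun s => f s * exp (-s) - α * exp (-s) - β * (w s * exp (-s)) := by
    funext s; ring
  have I1 : IntegrableOn (fun s => f s - α) (Ioc 0 b) := hf1.sub hc1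
  have I2 : IntegrableOn (fun s => f s * exp (-s) - α * exp (-s)) (Ioi 0) :=
    hf2.sub (he.const_mul α)
  have key := exp_mean_lt_uniform_mean hb (ψ := fun s => f s - α - β * w s)
    (I1.sub (hw1.const_mul β))
    (by rw [heq]; exact I2.sub (hw2.const_mul β)) hs hneg
  rw [heq, integral_sub I2 (hw2.const_mul β), integral_sub hf2 (he.const_mul α),
    integral_sub I1 (hw1.const_mul β), integral_sub hf1 hc1, integral_const_mul,
    integral_const_mul, integral_const_mul, hw, integral_exp_neg_Ioi_zero] at key
  have hα : ∫ _ in Ioc 0 b, α = b * α := by simp [hb.le]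
  rw [hα] at key
  have : 1 / b * (b * α) = α := by field_simp
  linarith [mul_sub (1 / b) ((∫ s in Ioc 0 b, f s) - b * α) (β * ∫ s in Ioc 0 b, w s),
    mul_sub (1 / b) (∫ s in Ioc 0 b, f s) (b * α),
    mul_left_comm (1 / b) β (∫ s in Ioc 0 b, w s)]

/-- As a function of `w = s^(a-1)`, the shifted power `(x+s)^(a-1)` is strictly concave. -/
lemma strictConcaveOn_shift {a x : ℝ} (ha2 : a < 1) (hx : 0 < x) :
    StrictConcaveOn ℝ (Ioi 0) (fun w : ℝ => (x + w ^ (1 / (a - 1))) ^ (a - 1)) := by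
  have ha : a - 1 ≠ 0 := by linarith
  have hd : ∀ w : ℝ, 0 < w → HasDerivAt (fun w : ℝ => (x + w ^ (1 / (a - 1))) ^ (a - 1))
      ((w ^ (1 / (a - 1)) / (x + w ^ (1 / (a - 1)))) ^ (2 - a)) w := by
    intro w hw
    have hy : 0 < w ^ (1 / (a - 1)) := rpow_pos_of_pos hw _
    have h1 := ((hasDerivAt_rpow_const (p := 1 / (a - 1)) (Or.inl hw.ne')).const_add x).rpow_const
      (p := a - 1) (Or.inl (add_pos hx hy).ne')
    convert h1 using 1
    have e1 : w ^ (1 / (a - 1) - 1) = (w ^ (1 / (a - 1))) ^ (2 - a) := by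
      rw [← rpow_mul hw.le]; congr 1; field_simp; ring
    have e2 : (x + w ^ (1 / (a - 1))) ^ (a - 1 - 1) =
        ((x + w ^ (1 / (a - 1))) ^ (2 - a))⁻¹ := by
      rw [← rpow_neg (add_pos hx hy).le]; congr 1; ring
    rw [div_rpow hy.le (add_pos hx hy).le, e1, e2]
    field_simp
  refine StrictAntiOn.strictConcaveOn_of_deriv (convex_Ioi 0)
    (fun w hw => (hd w hw).continuousAt.continuousWithinAt) ?_
  rw [interior_Ioi]
  intro u hu v hv huv
  rw [(hd u hu).deriv, (hd v hv).deriv]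
  have hyu : 0 < u ^ (1 / (a - 1)) := rpow_pos_of_pos hu _
  have hyv : 0 < v ^ (1 / (a - 1)) := rpow_pos_of_pos hv _
  have hlt : v ^ (1 / (a - 1)) < u ^ (1 / (a - 1)) :=
    rpow_lt_rpow_of_neg hu huv (one_div_neg.2 (by linarith))
  refine rpow_lt_rpow (by positivity) ?_ (by linarith)
  rw [div_lt_div_iff₀ (by positivity) (by positivity)]
  nlinarith

/-- A strictly concave function on `(0,∞)` lies above the chord through `u < v` on `[u,v]`
and below its line elsewhere. -/
lemma chord_signs {F : ℝ → ℝ} (hF : StrictConcaveOn ℝ (Ioi 0) F) {u v : ℝ} (hu : 0 < u)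
    (huv : u < v) : ∃ α β : ℝ, (∀ w ∈ Icc u v, 0 ≤ F w - α - β * w) ∧
      (∀ w, 0 < w → w < u → F w - α - β * w < 0) ∧ (∀ w, v < w → F w - α - β * w < 0) := by
  have hv := hu.trans huv
  obtain ⟨β, hβ⟩ : ∃ β, β = (F v - F u) / (v - u) := ⟨_, rfl⟩
  have hβ' : F v - F u = β * (v - u) := by
    rw [hβ, div_mul_cancel₀]; linarith
  refine ⟨F u - β * u, β, ?_, ?_, ?_⟩
  · rintro w ⟨h1, h2⟩
    rcases h1.eq_or_lt with rfl | h1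
    · linarith
    rcases h2.eq_or_lt with rfl | h2
    · linarith
    have := hF.slope_anti_adjacent hu hv h1 h2
    rw [div_lt_div_iff₀ (by linarith) (by linarith)] at this
    nlinarith
  · intro w hw h
    have := hF.slope_anti_adjacent hw hv h huv
    rw [← hβ, lt_div_iff₀ (by linarith)] at this
    linarith
  · intro w h
    have := hF.slope_anti_adjacent hu (hv.trans h) huv h
    rw [← hβ, div_lt_iff₀ (by linarith)] at this
    linarith

lemma one_le_Gamma {t : ℝ} (h0 : 0 < t) (h1 : t < 1) : 1 ≤ Real.Gamma t := by
  -- By convexity, `Γ(1) = 1` is at most a convex combination of `Γ(t)` and `Γ(2) = 1`.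
  have h := Real.convexOn_Gamma.slope_mono_adjacent (x := t) (y := 1) (z := 2) h0
    (by norm_num [Set.mem_Ioi]) h1 (by norm_num)
  rw [Real.Gamma_one, Real.Gamma_two] at h
  rw [div_le_iff₀ (by linarith)] at h
  linarith

lemma shift_integrals {a x b : ℝ} (ha0 : a ≠ 0) (ha2 : a < 1) (hx : 0 < x) (hb : 0 < b) :
    IntegrableOn (fun s => (x + s) ^ (a - 1)) (Ioc 0 b) ∧
    IntegrableOn (fun s => (x + s) ^ (a - 1) * exp (-s)) (Ioi 0) ∧
    incGamma a x = exp (-x) * ∫ s in Ioi 0, (x + s) ^ (a - 1) * exp (-s) ∧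
    ∫ s in Ioc 0 b, (x + s) ^ (a - 1) = ((x + b) ^ a - x ^ a) / a := by
  have hcont : ContinuousOn (fun s : ℝ => (x + s) ^ (a - 1)) (Ici 0) := by
    refine ContinuousOn.rpow_const (by fun_prop) fun s hs => Or.inl ?_
    have : 0 ≤ s := hs
    linarith
  refine ⟨?_, ?_, ?_, ?_⟩
  · exact ((hcont.mono Icc_subset_Ici_self).integrableOn_Icc).mono_set Ioc_subset_Icc_self
  · have he : IntegrableOn (fun s : ℝ => exp (-s)) (Ioi 0) := by
      simpa using exp_neg_integrableOn_Ioi 0 one_pos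
    refine Integrable.mono' (he.const_mul (x ^ (a - 1))) ?_ ?_
    · refine ContinuousOn.aestronglyMeasurable ?_ measurableSet_Ioi
      exact (hcont.mono Ioi_subset_Ici_self).mul (by fun_prop)
    · filter_upwards [ae_restrict_mem measurableSet_Ioi] with s hs
      have hs : 0 < s := hs
      rw [Real.norm_of_nonneg (by positivity)]
      gcongr ?_ * _
      exact rpow_le_rpow_of_nonpos hx (by linarith) (by linarith)
  · have h := (measurePreserving_add_left volume x).setIntegral_preimage_emb
      (measurableEmbedding_addLeft x) (fun t : ℝ => t ^ (a - 1) * exp (-t)) (Ioi x)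
    rw [show (fun s => x + s) ⁻¹' Ioi x = Ioi 0 by ext s; simp] at h
    rw [incGamma, ← h, ← integral_const_mul]
    congr 1
    funext s
    rw [neg_add, exp_add]; ring
  · rw [← intervalIntegral.integral_of_le hb.le,
      intervalIntegral.integral_comp_add_left (fun t : ℝ => t ^ (a - 1)), integral_rpow]
    · simp
    · refine Or.inr ⟨fun h => ha0 (by linarith), ?_⟩
      rw [uIcc_of_le (by linarith)]
      simp [hx]

theorem stmt0 (a : ℝ) (ha1 : -1 < a) (ha2 : a < 1) (ha0 : a ≠ 0) :
    ∀ x : ℝ, 0 < x → incGamma a x < Gbound a x := by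
  intro x hx
  have hG : 0 < Real.Gamma (a + 1) := Real.Gamma_pos_of_pos (by linarith)
  have hbdef : bCoef a = Real.Gamma (a + 1) ^ (1 / (a - 1)) := by
    simp [bCoef, ha2.ne]
  have hb : 0 < bCoef a := hbdef ▸ rpow_pos_of_pos hG _
  have hbpow : bCoef a ^ (a - 1) = Real.Gamma (a + 1) := by
    rw [hbdef, ← rpow_mul hG.le, one_div_mul_cancel (by linarith), rpow_one]
  have hbneg : a < 0 → bCoef a ≤ 1 := fun h => by
    rw [hbdef]
    exact rpow_le_one_of_one_le_of_nonpos (one_le_Gamma (by linarith) (by linarith))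
      (one_div_nonpos.2 (by linarith))
  rw [Gbound]
  generalize bCoef a = b at hb hbpow hbneg
  obtain ⟨hf1, hf2, hinc, hunif⟩ := shift_integrals ha0 ha2 hx hb
  have hanti : ∀ s t : ℝ, 0 < s → s < t → (x + t) ^ (a - 1) < (x + s) ^ (a - 1) :=
    fun s t hs hst => rpow_lt_rpow_of_neg (by linarith) (by linarith) (by linarith)
  suffices h : ∫ s in Ioi 0, (x + s) ^ (a - 1) * exp (-s) <
      1 / b * ∫ s in Ioc 0 b, (x + s) ^ (a - 1) by
    rw [hunif] at h
    rw [hinc]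
    calc _ < exp (-x) * (1 / b * (((x + b) ^ a - x ^ a) / a)) := by gcongr
      _ = _ := by field_simp
  rcases le_or_gt b 1 with hb1 | hb1
  · -- For `b ≤ 1` the density `1/b - e^{-s}` is nonnegative on `(0,b]`: subtracting the
    -- constant `(x+b)^(a-1)` suffices.
    refine exp_mean_lt_uniform_mean_of_line hb (w := fun _ => 0) ((x + b) ^ (a - 1)) 0 hf1 hf2
      (by simp) (by simp) (by simp) ?_ ?_
    · rintro s ⟨hs0, hsb⟩
      refine mul_nonneg ?_ ?_
      · rcases hsb.eq_or_lt with rfl | hsb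
        · simp
        · linarith [hanti s b hs0 hsb]
      · have h1 : exp (-s) ≤ 1 := exp_le_one_iff.2 (by linarith)
        have h2 : 1 ≤ 1 / b := (one_le_div hb).2 hb1
        linarith
    · intro s hs
      linarith [hanti b s hb hs]
  · have ha : 0 < a := by
      rcases lt_or_gt_of_ne ha0 with h | h
      · linarith [hbneg h]
      · exact h
    have hlog : 0 < log b := log_pos hb1
    have hlogb : log b < b := (log_lt_sub_one_of_pos hb hb1.ne').trans (by linarith)
    have hwanti : ∀ s t : ℝ, 0 < s → s < t → t ^ (a - 1) < s ^ (a - 1) :=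
      fun s t hs hst => rpow_lt_rpow_of_neg hs hst (by linarith)
    -- The chord is taken at `s = log b` and `s = b`, the sign changes of
    -- `(1/b) 1_{s < b} - e^{-s}`.
    obtain ⟨α, β, hmid, hlow, hhigh⟩ := chord_signs (strictConcaveOn_shift ha2 hx)
      (rpow_pos_of_pos hb (a - 1)) (hwanti _ _ hlog hlogb)
    have hinv : ∀ s : ℝ, 0 < s → (s ^ (a - 1)) ^ (1 / (a - 1)) = s := fun s hs => by
      rw [← rpow_mul hs.le, mul_one_div_cancel (by linarith), rpow_one]
    have hwint : IntervalIntegrable (fun s : ℝ => s ^ (a - 1)) volume 0 b :=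
      intervalIntegral.intervalIntegrable_rpow' (by linarith)
    have hGcomm : (fun s : ℝ => s ^ (a - 1) * exp (-s)) = fun s => exp (-s) * s ^ (a - 1) := by
      funext s; ring
    refine exp_mean_lt_uniform_mean_of_line hb (w := fun s => s ^ (a - 1)) α β hf1 hf2
      ((intervalIntegrable_iff_integrableOn_Ioc_of_le hb.le).1 hwint) ?_ ?_ ?_ ?_
    · rw [hGcomm]
      exact Real.GammaIntegral_convergent ha
    · -- Both means equal `Γ(a)`; this is where the choice of `b` enters.
      rw [hGcomm, ← Real.Gamma_eq_integral ha, ← intervalIntegral.integral_of_le hb.le,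
        integral_rpow (Or.inl (by linarith)), sub_add_cancel, zero_rpow ha0, sub_zero]
      rw [Real.Gamma_add_one ha0] at hbpow
      rw [show b ^ a = b * b ^ (a - 1) by
        rw [rpow_sub_one hb.ne']; field_simp, hbpow]
      field_simp
    · rintro s ⟨hs0, hsb⟩
      rcases lt_or_ge s (log b) with hs | hs
      · have h := hhigh _ (hwanti s _ hs0 hs)
        simp only [hinv s hs0] at h
        refine mul_nonneg_of_nonpos_of_nonpos h.le ?_
        have : exp (-log b) ≤ exp (-s) := exp_le_exp.2 (by linarith)
        rw [exp_neg, exp_log hb] at this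
        rw [one_div]; linarith
      · have h := hmid (s ^ (a - 1)) ⟨rpow_le_rpow_of_nonpos hs0 hsb (by linarith),
          rpow_le_rpow_of_nonpos hlog hs (by linarith)⟩
        simp only [hinv s hs0] at h
        refine mul_nonneg h ?_
        have : exp (-s) ≤ exp (-log b) := exp_le_exp.2 (by linarith)
        rw [exp_neg (log b), exp_log hb] at this
        rw [one_div]; linarith
    · intro s hs
      have hs0 := hb.trans hs
      have h := hlow _ (rpow_pos_of_pos hs0 _) (hwanti b s hb hs)
      simpa only [hinv s hs0] using h
end

section
/- For every real x > 0, Γ(0,x) < e^(−x) · ln((x+1)/x), i.e. ∫_x^∞ t^(-1) e^(-t) dt < e^(−x) ln((x+1)/x). -/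
/-!
Put `F t = -e^(-t) (log (t+1) - log t)`. It vanishes at infinity and
`F' t = e^(-t) (log (t+1) - log t) + e^(-t) (1/t - 1/(t+1))`. Since `log (1 + 1/t) > 1/(t+1)`
(`inv_add_one_lt_log_sub`), the derivative `F'` strictly exceeds the integrand `e^(-t)/t` for every
`t > 0`. Integrating over `(x, ∞)` gives `Γ(0,x) < -F x`, which is the claimed bound.
-/

open Real Filter Set

/-- The inequality `log u < u - 1` at `u = t/(t+1) ≠ 1`. -/
lemma inv_add_one_lt_log_sub {t : ℝ} (ht : 0 < t) :
    (t + 1)⁻¹ < Real.log (t + 1) - Real.log t := by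
  have hne : t / (t + 1) ≠ 1 := by
    rw [Ne, div_eq_one_iff_eq (by positivity)]
    linarith
  have h := Real.log_lt_sub_one_of_pos (by positivity : 0 < t / (t + 1)) hne
  rw [Real.log_div (by positivity) (by positivity)] at h
  have h' : t / (t + 1) - 1 = -(t + 1)⁻¹ := by
    field_simp
    ring
  linarith

theorem stmt1 : ∀ x : ℝ, 0 < x →
    incGamma 0 x < Real.exp (-x) * Real.log ((x + 1) / x) := by
  intro x hx
  set F : ℝ → ℝ := fun t => -(Real.exp (-t) * (Real.log (t + 1) - Real.log t)) with hF
  set F' : ℝ → ℝ := fun t =>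
    Real.exp (-t) * (Real.log (t + 1) - Real.log t) + Real.exp (-t) * (t⁻¹ - (t + 1)⁻¹) with hF'
  set f : ℝ → ℝ := fun t => t⁻¹ * Real.exp (-t) with hf
  have hpos : ∀ t ∈ Ici x, 0 < t := fun t ht => hx.trans_le ht
  have hderiv : ∀ t ∈ Ici x, HasDerivAt F (F' t) t := by
    intro t ht
    have ht0 := hpos t ht
    have h1 : HasDerivAt (fun t : ℝ => Real.exp (-t)) (Real.exp (-t) * (-1)) t :=
      (hasDerivAt_id t).neg.exp
    have h2 : HasDerivAt (fun t : ℝ => Real.log (t + 1)) (1 / (t + 1)) t :=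
      ((hasDerivAt_id t).add_const 1).log (by simp only [id]; positivity)
    have h3 := (h1.mul (h2.sub (Real.hasDerivAt_log ht0.ne'))).neg
    refine h3.congr_deriv ?_
    simp only [hF', Pi.sub_apply]
    ring
  have hlt : ∀ t ∈ Ioi x, f t < F' t := by
    intro t ht
    have h := mul_lt_mul_of_pos_left
      (inv_add_one_lt_log_sub (hpos t (Ioi_subset_Ici_self ht))) (Real.exp_pos (-t))
    simp only [hf, hF']
    linarith
  have hf0 : ∀ t ∈ Ioi x, 0 ≤ f t := by
    intro t ht
    have := hpos t (Ioi_subset_Ici_self ht)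
    positivity
  have hlim : Tendsto F atTop (nhds 0) := by
    simpa using (Real.tendsto_exp_neg_atTop_nhds_zero.mul
      (Real.tendsto_log_comp_add_sub_log 1)).neg
  have hint' : MeasureTheory.IntegrableOn F' (Ioi x) :=
    MeasureTheory.integrableOn_Ioi_deriv_of_nonneg' hderiv
      (fun t ht => (hf0 t ht).trans (hlt t ht).le) hlim
  have hval : ∫ t in Ioi x, F' t = 0 - F x :=
    MeasureTheory.integral_Ioi_of_hasDerivAt_of_tendsto' hderiv hint' hlim
  have hint : MeasureTheory.IntegrableOn f (Ioi x) := by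
    refine MeasureTheory.Integrable.mono' hint'
      (by fun_prop : Measurable f).aestronglyMeasurable ?_
    filter_upwards [MeasureTheory.ae_restrict_mem measurableSet_Ioi] with t ht
    rw [Real.norm_of_nonneg (hf0 t ht)]
    exact (hlt t ht).le
  -- A positive function has positive integral over the set `(x, ∞)` of positive measure.
  have hgap : 0 < ∫ t in Ioi x, (F' t - f t) := by
    refine (MeasureTheory.setIntegral_pos_iff_support_of_nonneg_ae ?_ (hint'.sub hint)).2 ?_
    · filter_upwards [MeasureTheory.ae_restrict_mem measurableSet_Ioi] with t ht
      exact (sub_pos.2 (hlt t ht)).le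
    · have hsub : Ioi x ⊆ Function.support (fun t => F' t - f t) ∩ Ioi x :=
        fun t ht => ⟨(sub_pos.2 (hlt t ht)).ne', ht⟩
      refine lt_of_lt_of_le ?_ (MeasureTheory.measure_mono hsub)
      simp
  rw [MeasureTheory.integral_sub hint' hint, hval] at hgap
  have hinc : incGamma 0 x = ∫ t in Ioi x, f t := by
    simp only [incGamma, hf, zero_sub, Real.rpow_neg_one]
  rw [hinc, Real.log_div (by positivity) hx.ne']
  simp only [hF] at hgap
  linarith
end

section
/- Let a be a real number with 1 < a < 2. Then for every real x > 0, g_a(x) < G_a(x) < Γ(a,x). -/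
/-!
Write `p = a - 1 ∈ (0,1)` and `b = b_a`. After multiplication by `e^x`, the upper inequality
compares two means of the function `s ↦ (x+s)^p`: the mean over the uniform law on `(0,b)`, which
gives `e^x G_a(x)`, and the mean over the exponential law, which gives `e^x Γ(a,x)`. The choice of
`b` says that both laws give the same mean to `s^p` (and of course to `1`). The difference of the
densities, `e^{-s} - 1_{s<b}/b`, has the sign pattern `+,-,+` with changes at `log b` and `b`.
Since `(x+s)^p` is a strictly convex function of `u = s^p` (`strictConvexOn_shift`), subtracting
the chord, a combination of `1` and `s^p`, through `s = log b` and `s = b` leaves a function with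
the same sign pattern, so the difference of the means is positive.

For the lower inequality, both sides agree at `x = 0`, and the derivative of the difference is
positive because secant slopes of the strictly concave `t^p` from `x` decrease with the length of
the interval. This uses `b < 2`, i.e. `Γ(a+1) < 2^(a-1)`, which follows from log-convexity of `Γ`
on `[3,4]`, the functional equation and the strict Bernoulli inequality.
-/

open Real Filter Set

open MeasureTheory

/-- Log-convexity on `[3,4]` gives `(a+1) Γ(a+1) = Γ(a+2) ≤ 2 * 3^(a-1)`, and Bernoulli gives
`2 * (3/2)^(a-1) < a + 1`. -/
lemma Gamma_add_one_lt_two_rpow {a : ℝ} (ha1 : 1 < a) (ha2 : a < 2) :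
    Gamma (a + 1) < 2 ^ (a - 1) := by
  have h1 := Gamma_mul_add_mul_le_rpow_Gamma_mul_rpow_Gamma (s := 3) (t := 4) (a := 2 - a)
    (b := a - 1) (by norm_num) (by norm_num) (by linarith) (by linarith) (by ring)
  have e1 : (2 - a) * 3 + (a - 1) * 4 = (a + 1) + 1 := by ring
  have g3 : Gamma 3 = 2 := by
    rw [show (3 : ℝ) = ((2 : ℕ) : ℝ) + 1 by norm_num, Gamma_nat_eq_factorial]
    norm_num [Nat.factorial]
  have g4 : Gamma 4 = 2 * 3 := by
    rw [show (4 : ℝ) = ((3 : ℕ) : ℝ) + 1 by norm_num, Gamma_nat_eq_factorial]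
    norm_num [Nat.factorial]
  rw [e1, Gamma_add_one (by linarith), g3, g4, mul_rpow (by norm_num) (by norm_num), ← mul_assoc,
    ← rpow_add (by norm_num), show 2 - a + (a - 1) = (1 : ℝ) by ring, rpow_one] at h1
  have h2 := rpow_one_add_lt_one_add_mul_self (s := 1 / 2) (p := a - 1) (by norm_num)
    (by norm_num) (by linarith) (by linarith)
  have h3 : (3 : ℝ) ^ (a - 1) = 2 ^ (a - 1) * (1 + 1 / 2) ^ (a - 1) := by
    rw [← mul_rpow (by norm_num) (by norm_num)]; norm_num
  have h4 : (0 : ℝ) < 2 ^ (a - 1) := by positivity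
  rw [h3] at h1
  have h5 := mul_lt_mul_of_pos_left h2 h4
  nlinarith

lemma one_lt_Gamma_add_one {a : ℝ} (ha1 : 1 < a) : 1 < Gamma (a + 1) := by
  have := Gamma_strictMonoOn_Ici (a := 2) (b := a + 1) (by simp) (by simp; linarith) (by linarith)
  rwa [Gamma_two] at this

lemma bCoef_rpow {a : ℝ} (ha1 : 1 < a) : bCoef a ^ (a - 1) = Gamma (a + 1) := by
  have h := one_lt_Gamma_add_one ha1
  rw [bCoef, if_neg ha1.ne', ← rpow_mul (by linarith), one_div_mul_cancel (by linarith), rpow_one]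

lemma one_lt_bCoef {a : ℝ} (ha1 : 1 < a) : 1 < bCoef a := by
  rw [bCoef, if_neg ha1.ne']
  exact one_lt_rpow (one_lt_Gamma_add_one ha1) (by apply one_div_pos.2; linarith)

lemma bCoef_lt_two {a : ℝ} (ha1 : 1 < a) (ha2 : a < 2) : bCoef a < 2 := by
  have h := bCoef_rpow ha1 ▸ Gamma_add_one_lt_two_rpow ha1 ha2
  exact (rpow_lt_rpow_iff (by linarith [one_lt_bCoef ha1]) (by norm_num) (by linarith)).1 h

lemma bCoef_rpow_self {a : ℝ} (ha1 : 1 < a) : bCoef a ^ a = a * Gamma a * bCoef a := by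
  have hb := one_lt_bCoef ha1
  rw [← Gamma_add_one (by linarith), ← bCoef_rpow ha1, ← rpow_add_one (by linarith)]
  ring_nf

lemma gbound_lt_Gbound {a : ℝ} (ha1 : 1 < a) (ha2 : a < 2) {x : ℝ} (hx : 0 < x) :
    gbound a x < Gbound a x := by
  have hb1 := one_lt_bCoef ha1
  have hb2 := bCoef_lt_two ha1 ha2
  have hbr := bCoef_rpow_self ha1
  rw [gbound, Gbound]
  set b := bCoef a
  have ha0 : a ≠ 0 := by linarith
  have hb0 : b ≠ 0 := by linarith
  let F : ℝ → ℝ := fun y => ((y + b) ^ a - y ^ a) / (a * b) - ((y + 2) ^ a - y ^ a) / (2 * a)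
  have hder : ∀ y, HasDerivAt F (((y + b) ^ (a - 1) - y ^ (a - 1)) / b
      - ((y + 2) ^ (a - 1) - y ^ (a - 1)) / 2) y := by
    intro y
    have d (c : ℝ) : HasDerivAt (fun y : ℝ => (y + c) ^ a) (a * (y + c) ^ (a - 1)) y := by
      simpa using ((hasDerivAt_id y).add_const c).rpow_const (p := a) (Or.inr ha1.le)
    have d0 : HasDerivAt (fun y : ℝ => y ^ a) (a * y ^ (a - 1)) y :=
      hasDerivAt_rpow_const (Or.inr ha1.le)
    convert! (((d b).sub d0).div_const (a * b)).sub (((d 2).sub d0).div_const (2 * a)) using 1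
    field_simp
  have hmono : StrictMonoOn F (Ici 0) := by
    apply strictMonoOn_of_deriv_pos (convex_Ici 0)
    · exact fun y _ => (hder y).continuousAt.continuousWithinAt
    · intro y hy
      rw [interior_Ici] at hy
      have hy : 0 < y := hy
      rw [(hder y).deriv]
      have := (strictConcaveOn_rpow (p := a - 1) (by linarith) (by linarith)).secant_strict_mono
        (a := y) (x := y + b) (y := y + 2) (by simp; linarith) (by simp; linarith)
        (by simp; linarith) (by linarith) (by linarith) (by linarith)
      simp only [add_sub_cancel_left] at this
      linarith
  have h := hmono (by simp) (by simpa using hx.le) hx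
  have h0 : F 0 = Gamma a - 2 ^ a / (2 * a) := by
    simp only [F, zero_add, zero_rpow ha0, sub_zero, hbr]
    field_simp
  rw [h0] at h
  rw [mul_div_right_comm]
  apply mul_lt_mul_of_pos_right _ (exp_pos _)
  simp only [F] at h
  rw [sub_div _ ((2 : ℝ) ^ a)]
  linarith

/-- In the variable `u = s^p`, the function `(x+s)^p` is strictly convex: its derivative is
`(s/(x+s))^(1-p)`, which increases with `s`. -/
lemma strictConvexOn_shift {p x : ℝ} (hp0 : 0 < p) (hp1 : p < 1) (hx : 0 < x) :
    StrictConvexOn ℝ (Ici 0) (fun u : ℝ => (x + u ^ (1 / p)) ^ p) := by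
  have hq : 1 ≤ 1 / p := by rw [le_div_iff₀ hp0]; linarith
  have hder : ∀ u : ℝ, 0 < u → HasDerivAt (fun u : ℝ => (x + u ^ (1 / p)) ^ p)
      ((u ^ (1 / p) / (x + u ^ (1 / p))) ^ (1 - p)) u := by
    intro u hu
    have hw : 0 < u ^ (1 / p) := by positivity
    have d0 : HasDerivAt (fun u : ℝ => u ^ (1 / p)) (1 / p * u ^ (1 / p - 1)) u :=
      hasDerivAt_rpow_const (Or.inr hq)
    convert! (d0.const_add x).rpow_const (p := p) (Or.inl (by positivity)) using 1
    have e1 : u ^ (1 / p - 1) = (u ^ (1 / p)) ^ (1 - p) := by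
      rw [← rpow_mul hu.le]; congr 1; field_simp
    rw [e1, div_rpow hw.le (by positivity), show p - 1 = -(1 - p) by ring,
      rpow_neg (by positivity)]
    field_simp
  apply StrictMonoOn.strictConvexOn_of_deriv (convex_Ici 0)
  · apply ContinuousOn.rpow_const
    · exact continuousOn_const.add (continuous_rpow_const (by positivity)).continuousOn
    · exact fun _ _ => Or.inr hp0.le
  · rw [interior_Ici]
    intro u hu v hv huv
    have hu : 0 < u := hu
    have hv : 0 < v := hv
    rw [(hder u hu).deriv, (hder v hv).deriv]
    have h1 : u ^ (1 / p) < v ^ (1 / p) := rpow_lt_rpow hu.le huv (by positivity)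
    have h2 : 0 < u ^ (1 / p) := by positivity
    apply rpow_lt_rpow (by positivity) _ (by linarith)
    rw [div_lt_div_iff₀ (by positivity) (by positivity)]
    nlinarith

lemma Gbound_lt_incGamma {a : ℝ} (ha1 : 1 < a) (ha2 : a < 2) {x : ℝ} (hx : 0 < x) :
    Gbound a x < incGamma a x := by
  have hb1 := one_lt_bCoef ha1
  have hbr := bCoef_rpow_self ha1
  rw [Gbound]
  set b := bCoef a
  have ha0 : a ≠ 0 := by linarith
  have hb0 : 0 < b := by linarith
  have hp : 0 < a - 1 := by linarith
  -- the Gamma integrand and its translate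
  have hgam : IntegrableOn (fun t : ℝ => t ^ (a - 1) * exp (-t)) (Ioi 0) := by
    simpa only [mul_comm] using GammaIntegral_convergent (s := a) (by linarith)
  have hgamI : ∫ t in Ioi (0 : ℝ), t ^ (a - 1) * exp (-t) = Gamma a := by
    rw [Gamma_eq_integral (by linarith)]; simp only [mul_comm]
  have hpre : (fun s => x + s) ⁻¹' Ioi x = Ioi 0 := by ext; simp
  have hshift : ∀ s : ℝ, (x + s) ^ (a - 1) * exp (-(x + s))
      = exp (-x) * ((x + s) ^ (a - 1) * exp (-s)) := by
    intro s; rw [neg_add, exp_add]; ring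
  have hfint : IntegrableOn (fun s : ℝ => (x + s) ^ (a - 1) * exp (-s)) (Ioi 0) := by
    have h := ((measurePreserving_add_left volume x).integrableOn_comp_preimage
      (measurableEmbedding_addLeft x) (s := Ioi x)).2 (hgam.mono_set (Ioi_subset_Ioi hx.le))
    rw [hpre] at h
    have h2 := h.const_mul (exp x)
    refine h2.congr (ae_of_all _ fun s => ?_)
    simp only [Function.comp, hshift]
    rw [← mul_assoc, ← exp_add]; simp
  have hfI : incGamma a x = exp (-x) * ∫ s in Ioi (0 : ℝ), (x + s) ^ (a - 1) * exp (-s) := by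
    have h := (measurePreserving_add_left volume x).setIntegral_preimage_emb
      (measurableEmbedding_addLeft x) (fun t : ℝ => t ^ (a - 1) * exp (-t)) (Ioi x)
    rw [hpre] at h
    rw [incGamma, ← h]
    simp only [hshift]
    rw [integral_const_mul]
  -- `(x+s)^(a-1)` minus its chord, with cleared denominators
  have hl0 : 0 < log b := log_pos hb1
  have hlb : log b < b := by linarith [log_le_sub_one_of_pos hb0]
  set l := log b with hl
  have hφ := strictConvexOn_shift hp (by linarith : a - 1 < 1) hx
  have hroot : ∀ s : ℝ, 0 ≤ s → (s ^ (a - 1)) ^ (1 / (a - 1)) = s := by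
    intro s hs; rw [← rpow_mul hs, mul_one_div_cancel hp.ne', rpow_one]
  obtain ⟨D, hD⟩ : ∃ D, D = b ^ (a - 1) - l ^ (a - 1) := ⟨_, rfl⟩
  obtain ⟨A, hA⟩ : ∃ A, A = b ^ (a - 1) * (x + l) ^ (a - 1) - l ^ (a - 1) * (x + b) ^ (a - 1) :=
    ⟨_, rfl⟩
  obtain ⟨B, hB⟩ : ∃ B, B = (x + b) ^ (a - 1) - (x + l) ^ (a - 1) := ⟨_, rfl⟩
  have hDpos : 0 < D := by
    rw [hD]; exact sub_pos.2 (rpow_lt_rpow hl0.le hlb hp)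
  let h : ℝ → ℝ := fun s => D * (x + s) ^ (a - 1) - A - B * s ^ (a - 1)
  have hthree : ∀ r s t : ℝ, 0 ≤ r → r < s → s < t →
      (t ^ (a - 1) - r ^ (a - 1)) * (x + s) ^ (a - 1) <
        (t ^ (a - 1) - s ^ (a - 1)) * (x + r) ^ (a - 1)
          + (s ^ (a - 1) - r ^ (a - 1)) * (x + t) ^ (a - 1) := by
    intro r s t hr hrs hst
    have := hφ.secant_strict_mono_aux1 (x := r ^ (a - 1)) (y := s ^ (a - 1)) (z := t ^ (a - 1))
      (rpow_nonneg hr _) (rpow_nonneg (by linarith) _) (rpow_lt_rpow hr hrs hp)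
      (rpow_lt_rpow (by linarith) hst hp)
    simpa only [hroot r hr, hroot s (by linarith), hroot t (by linarith)] using this
  have hpos1 : ∀ s, 0 ≤ s → s < l → 0 < h s := by
    intro s hs hsl
    have := hthree s l b hs hsl hlb
    simp only [h, hD, hA, hB]; linarith
  have hneg : ∀ s, l < s → s < b → h s < 0 := by
    intro s hs hsb
    have := hthree l s b hl0.le hs hsb
    simp only [h, hD, hA, hB]; linarith
  have hpos2 : ∀ s, b < s → 0 < h s := by
    intro s hs
    have := hthree l b s hl0.le hlb hs
    simp only [h, hD, hA, hB]; linarith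
  have hhl : h l = 0 := by simp only [h, hD, hA, hB]; ring
  have hhb : h b = 0 := by simp only [h, hD, hA, hB]; ring
  have hcf : Continuous (fun s : ℝ => (x + s) ^ (a - 1)) :=
    (continuous_const.add continuous_id).rpow_const fun _ => Or.inr hp.le
  have hcp : Continuous (fun s : ℝ => s ^ (a - 1)) := continuous_rpow_const hp.le
  have hcont : Continuous h := ((continuous_const.mul hcf).sub continuous_const).sub
    (continuous_const.mul hcp)
  -- on `(0,b)` both `h` and the difference of densities change sign at `l = log b` only
  have hI1 : 0 < ∫ s in (0 : ℝ)..b, h s * (exp (-s) - 1 / b) := by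
    have hlow : ∀ s, s < l → 0 < exp (-s) - 1 / b := by
      intro s hs
      rw [← exp_log hb0, one_div, ← exp_neg, sub_pos, exp_lt_exp]; linarith
    apply intervalIntegral.integral_pos hb0
    · exact (hcont.mul (by fun_prop)).continuousOn
    · rintro s ⟨hs0, hsb⟩
      rcases lt_trichotomy s l with hs | hs | hs
      · exact (mul_pos (hpos1 s hs0.le hs) (hlow s hs)).le
      · rw [hs, hhl]; simp
      · rcases hsb.lt_or_eq with hsb | hsb
        · apply mul_nonneg_of_nonpos_of_nonpos (hneg s hs hsb).le
          rw [← exp_log hb0, one_div, ← exp_neg, sub_nonpos, exp_le_exp]; linarith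
        · rw [hsb, hhb]; simp
    · exact ⟨0, by simp [hb0.le], mul_pos (hpos1 0 le_rfl hl0) (hlow 0 hl0)⟩
  have hI2 : 0 ≤ ∫ s in Ioi b, h s * exp (-s) :=
    setIntegral_nonneg measurableSet_Ioi fun s hs => (mul_pos (hpos2 s hs) (exp_pos _)).le
  have hexp : IntegrableOn (fun s : ℝ => exp (-s)) (Ioi 0) := integrableOn_exp_neg_Ioi 0
  have heq : (fun s => h s * exp (-s)) = fun s : ℝ =>
      (D * ((x + s) ^ (a - 1) * exp (-s)) - A * exp (-s)) - B * (s ^ (a - 1) * exp (-s)) := by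
    funext s; simp only [h]; ring
  have hhint : IntegrableOn (fun s => h s * exp (-s)) (Ioi 0) := by
    rw [heq]
    exact ((hfint.const_mul D).sub (hexp.const_mul A)).sub (hgam.const_mul B)
  have hE : ∫ s in Ioi (0 : ℝ), h s * exp (-s) =
      D * (∫ s in Ioi (0 : ℝ), (x + s) ^ (a - 1) * exp (-s)) - A - B * Gamma a := by
    have hDA : IntegrableOn (fun s : ℝ =>
        D * ((x + s) ^ (a - 1) * exp (-s)) - A * exp (-s)) (Ioi 0) :=
      (hfint.const_mul D).sub (hexp.const_mul A)
    rw [heq, integral_sub hDA (hgam.const_mul B),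
      integral_sub (hfint.const_mul D) (hexp.const_mul A), integral_const_mul,
      integral_const_mul, integral_const_mul, hgamI, integral_exp_neg_Ioi_zero, mul_one]
  have hU : ∫ s in (0 : ℝ)..b, h s =
      D * (((x + b) ^ a - x ^ a) / a) - A * b - B * (b ^ a / a) := by
    have i1 : ∫ s in (0 : ℝ)..b, (x + s) ^ (a - 1) = ((x + b) ^ a - x ^ a) / a := by
      rw [intervalIntegral.integral_comp_add_left (fun t : ℝ => t ^ (a - 1)) x,
        integral_rpow (Or.inl (by linarith))]
      simp
    have i2 : ∫ s in (0 : ℝ)..b, s ^ (a - 1) = b ^ a / a := by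
      rw [integral_rpow (Or.inl (by linarith))]
      simp [zero_rpow ha0]
    simp only [h]
    rw [intervalIntegral.integral_sub, intervalIntegral.integral_sub,
      intervalIntegral.integral_const_mul, intervalIntegral.integral_const_mul, i1, i2,
      intervalIntegral.integral_const]
    · simp only [smul_eq_mul]; ring
    · exact (continuous_const.mul hcf).intervalIntegrable _ _
    · exact continuous_const.intervalIntegrable _ _
    · exact ((continuous_const.mul hcf).sub continuous_const).intervalIntegrable _ _
    · exact (continuous_const.mul hcp).intervalIntegrable _ _
  have hsplit : ∫ s in Ioi (0 : ℝ), h s * exp (-s) =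
      (∫ s in (0 : ℝ)..b, h s * exp (-s)) + ∫ s in Ioi b, h s * exp (-s) := by
    rw [intervalIntegral.integral_of_le hb0.le, ← setIntegral_union Ioc_disjoint_Ioi_same
      measurableSet_Ioi (hhint.mono_set Ioc_subset_Ioi_self)
      (hhint.mono_set (Ioi_subset_Ioi hb0.le)), Ioc_union_Ioi_eq_Ioi hb0.le]
  have hI1' : ∫ s in (0 : ℝ)..b, h s * (exp (-s) - 1 / b) =
      (∫ s in (0 : ℝ)..b, h s * exp (-s)) - (∫ s in (0 : ℝ)..b, h s) * (1 / b) := by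
    rw [← intervalIntegral.integral_mul_const, ← intervalIntegral.integral_sub]
    · simp only [mul_sub]
    · exact (hcont.mul (by fun_prop)).intervalIntegrable _ _
    · exact (hcont.mul continuous_const).intervalIntegrable _ _
  -- the contributions of `A` and `B` cancel: both laws agree on `1` and on `s^(a-1)`
  have hU' : (∫ s in (0 : ℝ)..b, h s) * (1 / b) =
      D * (((x + b) ^ a - x ^ a) / (a * b)) - A - B * Gamma a := by
    rw [hU, hbr]; field_simp
  have hfin : ((x + b) ^ a - x ^ a) / (a * b)
      < ∫ s in Ioi (0 : ℝ), (x + s) ^ (a - 1) * exp (-s) := by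
    apply lt_of_mul_lt_mul_left _ hDpos.le
    linarith
  rw [hfI, mul_div_right_comm, mul_comm]
  exact mul_lt_mul_of_pos_left hfin (exp_pos _)

theorem stmt3 (a : ℝ) (ha1 : 1 < a) (ha2 : a < 2) :
    ∀ x : ℝ, 0 < x → gbound a x < Gbound a x ∧ Gbound a x < incGamma a x :=
  fun _ hx => ⟨gbound_lt_Gbound ha1 ha2 hx, Gbound_lt_incGamma ha1 ha2 hx⟩
end

section
/- Let a be a real number with a > 3. Then for every real x > 0, g_a(x) < Γ(a,x) < G_a(x). -/
/-!
Substituting `t = x + u` gives `exp x * Γ(a, x) = E[(x + T) ^ (a - 1)]` with `T` a standard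
exponential variable, while `exp x * G_a(x) = E[(x + U) ^ (a - 1)]` with `U` uniform on `[0, b_a]`,
and `exp x * g_a(x) = E[(x + V) ^ (a - 1) - V ^ (a - 1)] + E[T ^ (a - 1)]` with `V` uniform on
`[0, 2]`.

For `b > 1` the exponential density minus the uniform density on `[0, b]` has sign pattern
`+, -, +`, changing at `log b` and `b`. A strictly convex function of an increasing `w` has the same
sign pattern once the chord through these two points is subtracted. Hence if `w` has equal means
under both laws, the strictly convex function has the larger mean under the exponential one
(`convex_comparison`).

* Lower bound: `w u = u`, `b = 2` (both means are `1`), and `(x + u) ^ (a - 1) - u ^ (a - 1)` is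
  strictly convex in `u` because `a - 1 > 2` (`strictConvexOn_increment`).
* Upper bound: `w u = u ^ (a - 1)`, `b = b_a` (both means are `Γ(a)` by the choice of `b_a`), and
  `(x + u) ^ (a - 1)` is strictly concave as a function of `w` (`strictConcaveOn_minkowski`).
-/

open Real Filter Set

open MeasureTheory

/-- A strictly convex function lies weakly above its chord through `p < q` to the left of `p`,
weakly below between `p` and `q`, and strictly above to the right of `q`. -/
theorem chord_sign {k : ℝ → ℝ} (hk : StrictConvexOn ℝ (Ici 0) k) {p q : ℝ} (hp : 0 ≤ p)
    (hpq : p < q) {y : ℝ} (hy : 0 ≤ y) :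
    let F := k y - (k p + (k q - k p) / (q - p) * (y - p))
    (y ≤ p → 0 ≤ F) ∧ (p ≤ y → y ≤ q → F ≤ 0) ∧ (q < y → 0 < F) := by
  intro F
  have hq : 0 ≤ q := hp.trans hpq.le
  have hm : (k q - k p) / (q - p) * (q - p) = k q - k p :=
    div_mul_cancel₀ _ (sub_pos.2 hpq).ne'
  refine ⟨fun h => ?_, fun h1 h2 => ?_, fun h => ?_⟩
  · rcases h.eq_or_lt with rfl | h
    · simp [F]
    have := hk.slope_strict_mono_adjacent hy hq h hpq
    rw [div_lt_iff₀ (sub_pos.2 h)] at this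
    simp only [F]
    linarith
  · rcases h1.eq_or_lt with rfl | h1
    · simp [F]
    rcases h2.eq_or_lt with rfl | h2
    · simp only [F]; linarith
    have := hk.slope_strict_mono_adjacent hp hq h1 h2
    rw [div_lt_div_iff₀ (sub_pos.2 h1) (sub_pos.2 h2)] at this
    have h3 : k y - k p ≤ (k q - k p) / (q - p) * (y - p) := by
      rw [div_mul_eq_mul_div, le_div_iff₀ (sub_pos.2 hpq)]
      nlinarith
    simp only [F]; linarith
  · have := hk.slope_strict_mono_adjacent hp hy hpq h
    rw [lt_div_iff₀ (sub_pos.2 h)] at this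
    simp only [F]
    linarith

/-- The density `exp (-u)` exceeds the uniform density `1 / b` on `[0, log b]`, is smaller on
`[log b, b]`, and is compared with `0` beyond `b`. A function with the same sign pattern
`+, -, +` therefore has a larger mean under the exponential law than under the uniform one. -/
theorem uniform_lt_exponential {b : ℝ} (hb : 1 < b) {F : ℝ → ℝ}
    (hF : ContinuousOn F (Ici 0))
    (hFi : IntegrableOn (fun u => F u * exp (-u)) (Ioi 0))
    (h1 : ∀ u, 0 ≤ u → u ≤ log b → 0 ≤ F u)
    (h2 : ∀ u, log b ≤ u → u ≤ b → F u ≤ 0)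
    (h3 : ∀ u, b < u → 0 < F u) :
    (∫ u in (0)..b, F u) / b < ∫ u in Ioi 0, F u * exp (-u) := by
  have hb0 : 0 < b := by linarith
  have hFb : IntegrableOn (fun u => F u * exp (-u)) (Ioi b) :=
    hFi.mono_set (Ioi_subset_Ioi hb0.le)
  have hc : ContinuousOn F (uIcc 0 b) := by
    rw [uIcc_of_le hb0.le]; exact hF.mono Icc_subset_Ici_self
  rw [← intervalIntegral.integral_interval_add_Ioi hFi hFb, ← intervalIntegral.integral_div]
  have tail : 0 < ∫ u in Ioi b, F u * exp (-u) := by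
    have hpos : ∀ u ∈ Ioi b, 0 < F u * exp (-u) := fun u hu => mul_pos (h3 u hu) (exp_pos _)
    rw [setIntegral_pos_iff_support_of_nonneg_ae _ hFb]
    · have : Ioi b ⊆ Function.support (fun u => F u * exp (-u)) ∩ Ioi b :=
        fun u hu => ⟨(hpos u hu).ne', hu⟩
      refine lt_of_lt_of_le ?_ (measure_mono this)
      simp
    · exact (ae_restrict_iff' measurableSet_Ioi).2 (ae_of_all _ fun u hu => (hpos u hu).le)
  have body : ∫ u in (0)..b, F u / b ≤ ∫ u in (0)..b, F u * exp (-u) := by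
    refine intervalIntegral.integral_mono_on hb0.le ?_ ?_ fun u hu => ?_
    · exact (hc.div_const b).intervalIntegrable
    · exact (hc.mul (by fun_prop)).intervalIntegrable
    · have hbinv : exp (-log b) = b⁻¹ := by rw [exp_neg, exp_log hb0]
      rw [div_eq_mul_inv, ← hbinv]
      rcases le_total u (log b) with h | h
      · exact mul_le_mul_of_nonneg_left (exp_le_exp.2 (by linarith)) (h1 u hu.1 h)
      · exact mul_le_mul_of_nonpos_left (exp_le_exp.2 (by linarith)) (h2 u h hu.2)
  linarith

/-- If `w` has the same mean under the uniform law on `[0, b]` and under the standard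
exponential law, then a strictly convex function of `w` has the larger mean under the exponential
law: subtract from `k` its chord through `w (log b)` and `w b`, which does not change the
difference of the two means. -/
theorem convex_comparison {b : ℝ} (hb : 1 < b) {k w : ℝ → ℝ}
    (hk : StrictConvexOn ℝ (Ici 0) k) (hw : StrictMonoOn w (Ici 0)) (hw0 : ∀ u, 0 ≤ u → 0 ≤ w u)
    (hwc : ContinuousOn w (Ici 0)) (hkc : ContinuousOn (fun u => k (w u)) (Ici 0))
    (hwi : IntegrableOn (fun u => w u * exp (-u)) (Ioi 0))
    (hki : IntegrableOn (fun u => k (w u) * exp (-u)) (Ioi 0))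
    (hmom : ∫ u in Ioi 0, w u * exp (-u) = (∫ u in (0)..b, w u) / b) :
    (∫ u in (0)..b, k (w u)) / b < ∫ u in Ioi 0, k (w u) * exp (-u) := by
  have hb0 : 0 < b := by linarith
  have hc0 : 0 ≤ log b := (log_pos hb).le
  have hcb : log b < b := by linarith [log_le_sub_one_of_pos hb0]
  have hwcb : w (log b) < w b := hw hc0 hb0.le hcb
  set m := (k (w b) - k (w (log b))) / (w b - w (log b)) with hm
  set n := k (w (log b)) - m * w (log b) with hn
  have sgn := fun u (hu : 0 ≤ u) => chord_sign hk (hw0 _ hc0) hwcb (hw0 u hu)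
  simp only [← hm] at sgn
  have eqF : ∀ u, k (w u) - (k (w (log b)) + m * (w u - w (log b))) = k (w u) - (n + m * w u) :=
    fun u => by rw [hn]; ring
  simp only [eqF] at sgn
  have hei : IntegrableOn (fun u : ℝ => exp (-u)) (Ioi 0) := integrableOn_exp_neg_Ioi 0
  have hsplit : (fun u => (k (w u) - (n + m * w u)) * exp (-u)) =
      fun u => k (w u) * exp (-u) - (n * exp (-u) + m * (w u * exp (-u))) := by
    funext u; ring
  have hli : IntegrableOn (fun u => n * exp (-u) + m * (w u * exp (-u))) (Ioi 0) :=
    (hei.const_mul n).add (hwi.const_mul m)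
  have key := uniform_lt_exponential hb (F := fun u => k (w u) - (n + m * w u))
    (hkc.sub (continuousOn_const.add (continuousOn_const.mul hwc)))
    (by rw [hsplit]; exact hki.sub hli)
    (fun u hu h => (sgn u hu).1 (hw.monotoneOn hu hc0 h))
    (fun u h h' => (sgn u (hc0.trans h)).2.1 (hw.monotoneOn hc0 (hc0.trans h) h)
      (hw.monotoneOn (hc0.trans h) hb0.le h'))
    (fun u h => (sgn u (hb0.le.trans h.le)).2.2 (hw hb0.le (hb0.le.trans h.le) h))
  have ii : ∀ {f : ℝ → ℝ}, ContinuousOn f (Ici 0) → IntervalIntegrable f volume 0 b := by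
    intro f hf
    refine ContinuousOn.intervalIntegrable ?_
    rw [uIcc_of_le hb0.le]; exact hf.mono Icc_subset_Ici_self
  have hmw : ContinuousOn (fun u => m * w u) (Ici 0) := continuousOn_const.mul hwc
  have hlin : ContinuousOn (fun u => n + m * w u) (Ici 0) := continuousOn_const.add hmw
  rw [hsplit, integral_sub hki hli, integral_add (hei.const_mul n) (hwi.const_mul m),
    integral_const_mul, integral_const_mul, hmom, integral_exp_neg_Ioi_zero,
    intervalIntegral.integral_sub (ii hkc) (ii hlin),
    intervalIntegral.integral_add (ii continuousOn_const) (ii hmw), intervalIntegral.integral_const_mul,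
    intervalIntegral.integral_const] at key
  have : ((∫ u in (0)..b, k (w u)) - ((b - 0) • n + m * ∫ u in (0)..b, w u)) / b =
      (∫ u in (0)..b, k (w u)) / b - (n * 1 + m * ((∫ u in (0)..b, w u) / b)) := by
    rw [smul_eq_mul]; field_simp; ring
  linarith

theorem strictConvexOn_increment {p x : ℝ} (hp : 2 < p) (hx : 0 < x) :
    StrictConvexOn ℝ (Ici 0) fun u : ℝ => (x + u) ^ p - u ^ p := by
  have hd : ∀ q : ℝ, 1 ≤ q → ∀ u : ℝ, HasDerivAt (fun u : ℝ => (x + u) ^ q - u ^ q)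
      (q * (x + u) ^ (q - 1) - q * u ^ (q - 1)) u := by
    intro q hq u
    have h1 : HasDerivAt (fun u : ℝ => x + u) 1 u := (hasDerivAt_id u).const_add x
    have h2 := h1.rpow_const (p := q) (Or.inr hq)
    rw [one_mul] at h2
    exact h2.sub (Real.hasDerivAt_rpow_const (x := u) (p := q) (Or.inr hq))
  refine StrictMonoOn.strictConvexOn_of_deriv (convex_Ici 0)
    (fun u _ => (hd p (by linarith) u).continuousAt.continuousWithinAt) ?_
  rw [interior_Ici]
  have hder : deriv (fun u : ℝ => (x + u) ^ p - u ^ p) =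
      fun u => p * ((x + u) ^ (p - 1) - u ^ (p - 1)) := by
    funext u; rw [(hd p (by linarith) u).deriv]; ring
  rw [hder]
  have hmono : StrictMonoOn (fun u : ℝ => (x + u) ^ (p - 1) - u ^ (p - 1)) (Ioi 0) := by
    refine strictMonoOn_of_deriv_pos (convex_Ioi 0)
      (fun u _ => (hd (p - 1) (by linarith) u).continuousAt.continuousWithinAt) fun u hu => ?_
    rw [interior_Ioi] at hu
    rw [(hd (p - 1) (by linarith) u).deriv, ← mul_sub]
    refine mul_pos (by linarith) (sub_pos.2 ?_)
    exact rpow_lt_rpow (le_of_lt hu) (by linarith) (by linarith)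
  intro u hu v hv huv
  exact mul_lt_mul_of_pos_left (hmono hu hv huv) (by linarith)

/-- The derivative at `w > 0` is `(x * w ^ (-1/p) + 1) ^ (p - 1)`, which is strictly decreasing. -/
theorem strictConcaveOn_minkowski {p x : ℝ} (hp : 1 < p) (hx : 0 < x) :
    StrictConcaveOn ℝ (Ici 0) fun w : ℝ => (x + w ^ (1 / p)) ^ p := by
  have hp0 : 0 < p := by linarith
  refine StrictAntiOn.strictConcaveOn_of_deriv (convex_Ici 0) ?_ ?_
  · refine Continuous.continuousOn ?_
    exact (continuous_const.add (Real.continuous_rpow_const (by positivity))).rpow_const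
      fun _ => Or.inr hp0.le
  rw [interior_Ici]
  have hder : ∀ w ∈ Ioi (0 : ℝ), deriv (fun w : ℝ => (x + w ^ (1 / p)) ^ p) w =
      (x * w ^ (-(1 / p)) + 1) ^ (p - 1) := by
    intro w hw
    have hw : 0 < w := hw
    have hwp : 0 < w ^ (1 / p) := rpow_pos_of_pos hw _
    have h1 : HasDerivAt (fun w : ℝ => x + w ^ (1 / p)) (1 / p * w ^ (1 / p - 1)) w :=
      (Real.hasDerivAt_rpow_const (Or.inl hw.ne')).const_add x
    rw [(h1.rpow_const (p := p) (Or.inr hp.le)).deriv]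
    have e1 : x * w ^ (-(1 / p)) + 1 = (x + w ^ (1 / p)) * w ^ (-(1 / p)) := by
      rw [add_mul, ← rpow_add hw]; simp
    rw [e1, mul_rpow (by positivity) (by positivity), ← rpow_mul hw.le]
    have e2 : -(1 / p) * (p - 1) = 1 / p - 1 := by field_simp; ring
    rw [e2]; field_simp
  intro u hu v hv huv
  rw [hder u hu, hder v hv]
  have hu : 0 < u := hu
  have hv : 0 < v := hv
  refine rpow_lt_rpow (by positivity) ?_ (by linarith)
  have : v ^ (-(1 / p)) < u ^ (-(1 / p)) :=
    rpow_lt_rpow_of_neg hu huv (by simpa using hp0)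
  nlinarith

theorem integrable_shift {p x : ℝ} (hp : 0 < p) (hx : 0 ≤ x) :
    IntegrableOn (fun u => (x + u) ^ p * exp (-u)) (Ioi 0) := by
  have h0 : IntegrableOn (fun t : ℝ => t ^ p * exp (-t)) (Ioi x) := by
    have := Real.GammaIntegral_convergent (s := p + 1) (by linarith)
    simp only [add_sub_cancel_right] at this
    exact (this.mono_set (Ioi_subset_Ioi hx)).congr_fun (fun t _ => mul_comm _ _)
      measurableSet_Ioi
  have h1 := ((measurePreserving_add_left volume x).integrableOn_comp_preimage
    (measurableEmbedding_addLeft x)).2 h0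
  have hpre : (fun u => x + u) ⁻¹' Ioi x = Ioi 0 := by ext; simp
  rw [hpre] at h1
  refine IntegrableOn.congr_fun (h1.mul_const (exp x)) (fun u _ => ?_) measurableSet_Ioi
  simp only [Function.comp, mul_assoc, ← exp_add]
  congr 2; ring

theorem incGamma_eq (a x : ℝ) :
    incGamma a x = (∫ u in Ioi 0, (x + u) ^ (a - 1) * exp (-u)) * exp (-x) := by
  have hpre : (fun u => x + u) ⁻¹' Ioi x = Ioi 0 := by ext; simp
  rw [incGamma, ← (measurePreserving_add_left volume x).setIntegral_preimage_emb
    (measurableEmbedding_addLeft x), hpre, ← integral_mul_const]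
  congr 1; funext u
  rw [mul_assoc, ← exp_add]; congr 2; ring

theorem integral_rpow_exp {p : ℝ} (hp : 0 < p) :
    ∫ u in Ioi (0 : ℝ), u ^ p * exp (-u) = Gamma (p + 1) := by
  rw [Real.Gamma_eq_integral (by linarith)]
  simp only [add_sub_cancel_right, mul_comm]

theorem integral_shift_rpow {p x b : ℝ} (hp : 0 < p) :
    ∫ u in (0)..b, (x + u) ^ p = ((x + b) ^ (p + 1) - x ^ (p + 1)) / (p + 1) := by
  rw [intervalIntegral.integral_comp_add_left (fun t => t ^ p),
    integral_rpow (Or.inl (by linarith)), add_zero]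

theorem continuous_shift_rpow {p : ℝ} (hp : 0 < p) (x : ℝ) :
    Continuous fun u : ℝ => (x + u) ^ p :=
  (continuous_const.add continuous_id).rpow_const fun _ => Or.inr hp.le

/-- Apply the comparison to the strictly convex function `u ↦ (x + u) ^ (a - 1) - u ^ (a - 1)`; the
uniform law on `[0, 2]` and the exponential law both have mean `1`. -/
theorem lower_bound {a x : ℝ} (ha : 3 < a) (hx : 0 < x) : gbound a x < incGamma a x := by
  rw [incGamma_eq, gbound]
  refine mul_lt_mul_of_pos_right ?_ (exp_pos _)
  have hp : 0 < a - 1 := by linarith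
  have hi := integrable_shift hp hx.le
  have hi0 := integrable_shift hp le_rfl
  simp only [zero_add] at hi0
  have hi1 := integrable_shift one_pos le_rfl
  simp only [zero_add, rpow_one] at hi1
  have hc := continuous_shift_rpow hp x
  have hc0 := continuous_shift_rpow hp 0
  simp only [zero_add] at hc0
  have hmean : ∫ u in Ioi (0 : ℝ), u * exp (-u) = (∫ u in (0)..(2 : ℝ), u) / 2 := by
    have := integral_rpow_exp one_pos
    simp only [rpow_one] at this
    rw [this, integral_id, show (1 : ℝ) + 1 = 2 by norm_num, Gamma_two]
    norm_num
  have hsplit : (fun u : ℝ => ((x + u) ^ (a - 1) - u ^ (a - 1)) * exp (-u)) =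
      fun u => (x + u) ^ (a - 1) * exp (-u) - u ^ (a - 1) * exp (-u) := by
    funext u; ring
  have key := convex_comparison (b := 2) one_lt_two (w := fun u => u)
    (strictConvexOn_increment (p := a - 1) (by linarith) hx) (fun _ _ _ _ h => h)
    (fun _ h => h) continuousOn_id (hc.sub hc0).continuousOn hi1
    (by rw [hsplit]; exact hi.sub hi0) hmean
  have hI := integral_shift_rpow (x := x) (b := 2) hp
  have hI0 := integral_shift_rpow (x := 0) (b := 2) hp
  simp only [zero_add, sub_add_cancel] at hI hI0
  rw [hsplit, integral_sub hi hi0, integral_rpow_exp hp,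
    intervalIntegral.integral_sub (hc.intervalIntegrable _ _) (hc0.intervalIntegrable _ _),
    hI, hI0, zero_rpow (by linarith), sub_add_cancel] at key
  have e : ((x + 2) ^ a - x ^ a - (2 : ℝ) ^ a) / (2 * a) =
      (((x + 2) ^ a - x ^ a) / a - (2 ^ a - 0) / a) / 2 := by
    field_simp; ring
  rw [e]; linarith

/-- The second property says that `b_a` is chosen so that `u ^ (a - 1)` has the same mean under
the uniform law on `[0, b_a]` and under the standard exponential law. -/
theorem bCoef_props {a : ℝ} (ha : 1 < a) : 1 < bCoef a ∧ bCoef a ^ (a - 1) = Gamma (a + 1) := by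
  have hG : 1 < Gamma (a + 1) := by
    have h := Gamma_strictMonoOn_Ici (self_mem_Ici (a := (2 : ℝ)))
      (mem_Ici.2 (by linarith : 2 ≤ a + 1)) (by linarith)
    rwa [Gamma_two] at h
  have hp : 0 < a - 1 := by linarith
  rw [bCoef, if_neg ha.ne']
  refine ⟨one_lt_rpow hG (by positivity), ?_⟩
  rw [← rpow_mul (by linarith), one_div_mul_cancel hp.ne', rpow_one]

/-- Apply the comparison to `(x + u) ^ (a - 1)` viewed as a strictly concave function of
`w = u ^ (a - 1)`. -/
theorem upper_bound {a x : ℝ} (ha : 2 < a) (hx : 0 < x) : incGamma a x < Gbound a x := by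
  obtain ⟨hb, hbp⟩ := bCoef_props (a := a) (by linarith)
  have e : Gbound a x =
      ((x + bCoef a) ^ a - x ^ a) / a / bCoef a * exp (-x) := by
    rw [Gbound]; field_simp
  rw [incGamma_eq, e]
  set b := bCoef a
  have hb0 : 0 < b := by linarith
  refine mul_lt_mul_of_pos_right ?_ (exp_pos _)
  have hp : 0 < a - 1 := by linarith
  have hi := integrable_shift hp hx.le
  have hi0 := integrable_shift hp le_rfl
  simp only [zero_add] at hi0
  have hc := continuous_shift_rpow hp x
  have hc0 := continuous_shift_rpow hp 0
  simp only [zero_add] at hc0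
  have hI := integral_shift_rpow (x := x) (b := b) hp
  have hI0 := integral_shift_rpow (x := 0) (b := b) hp
  simp only [zero_add, sub_add_cancel] at hI hI0
  have hmom : ∫ u in Ioi (0 : ℝ), u ^ (a - 1) * exp (-u) = (∫ u in (0)..b, u ^ (a - 1)) / b := by
    have hba : b ^ a = a * Gamma a * b := by
      rw [← Gamma_add_one (by linarith), ← hbp, ← rpow_add_one hb0.ne', sub_add_cancel]
    rw [integral_rpow_exp hp, hI0, zero_rpow (by linarith), sub_add_cancel, hba]
    field_simp; ring
  have hcancel : ∀ u : ℝ, 0 ≤ u → (u ^ (a - 1)) ^ (1 / (a - 1)) = u := fun u hu => by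
    rw [← rpow_mul hu, mul_one_div_cancel hp.ne', rpow_one]
  have hk : ∀ u : ℝ, 0 ≤ u →
      -(x + (u ^ (a - 1)) ^ (1 / (a - 1))) ^ (a - 1) = -(x + u) ^ (a - 1) := fun u hu => by
    rw [hcancel u hu]
  have key := convex_comparison hb (w := fun u => u ^ (a - 1))
    (k := fun w => -(x + w ^ (1 / (a - 1))) ^ (a - 1))
    (strictConcaveOn_minkowski (p := a - 1) (by linarith) hx).neg
    (fun u hu v _ h => rpow_lt_rpow hu h hp) (fun u hu => rpow_nonneg hu _)
    hc0.continuousOn (hc.neg.continuousOn.congr fun u hu => hk u hu) hi0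
    (hi.neg.congr_fun (fun u hu => by simp only [hk u (le_of_lt hu), Pi.neg_apply, neg_mul])
      measurableSet_Ioi) hmom
  have r1 : ∫ u in (0)..b, -(x + (u ^ (a - 1)) ^ (1 / (a - 1))) ^ (a - 1) =
      ∫ u in (0)..b, -(x + u) ^ (a - 1) :=
    intervalIntegral.integral_congr fun u hu => by
      rw [uIcc_of_le hb0.le] at hu; exact hk u hu.1
  have r2 : ∫ u in Ioi (0 : ℝ), -(x + (u ^ (a - 1)) ^ (1 / (a - 1))) ^ (a - 1) * exp (-u) =
      ∫ u in Ioi (0 : ℝ), -((x + u) ^ (a - 1) * exp (-u)) :=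
    setIntegral_congr_fun measurableSet_Ioi fun u hu => by
      simp only [hk u (le_of_lt hu), neg_mul]
  rw [r1, r2, intervalIntegral.integral_neg, integral_neg, hI, neg_div] at key
  linarith

theorem stmt5 (a : ℝ) (ha : 3 < a) :
    ∀ x : ℝ, 0 < x → gbound a x < incGamma a x ∧ incGamma a x < Gbound a x :=
  fun _ hx => ⟨lower_bound ha hx, upper_bound (by linarith) hx⟩
end

section
/- Let a be a real number with a < -1. Then for every real x > 0, g_a^lo(x) < Γ(a,x) < g_a^hi(x). Moreover, the upper bound holds more generally: for every real a < 0 and every real x > 0, Γ(a,x) < g_a^hi(x) = x^a e^(−x)/(x−a). -/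
/-!
For `F(t) = t^a e^(-t) h(t)` one has `-F'(t) = t^(a-1) e^(-t) ((t-a) h(t) - t h'(t))`, so if `F` vanishes
at infinity then `F(x) = ∫_x^∞ t^(a-1) e^(-t) r(t) dt` with `r = (t-a) h - t h'` (`bound_eq_integral`).
Comparing `r` with `1` therefore compares `F(x)` with `Γ(a,x)`. Here
* `h = 1/(t-a)` gives `r = 1 + t/(t-a)^2 > 1`, the upper bound;
* `h = (t-a-1)/((t-a)^2+a)` gives `r = 1 - 2t^2/((t-a)^2+a)^2 < 1`, the lower bound.

In both cases `r ≥ 0`, so `F` is monotone and the integrand is automatically integrable.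
-/

open Real Filter Set

open MeasureTheory Topology

lemma bound_eq_integral {a x : ℝ} (ha : a < 0) (hx : 0 < x) (h h' r : ℝ → ℝ)
    (hd : ∀ t, 0 < t → HasDerivAt h (h' t) t)
    (hr : ∀ t, 0 < t → (t - a) * h t - t * h' t = r t)
    (hr0 : ∀ t, 0 < t → 0 ≤ r t)
    (hb : ∀ t, 1 ≤ t → 0 ≤ h t ∧ h t ≤ 1) :
    IntegrableOn (fun t => t ^ (a - 1) * Real.exp (-t) * r t) (Ioi x) ∧
      ∫ t in Ioi x, t ^ (a - 1) * Real.exp (-t) * r t = x ^ a * Real.exp (-x) * h x := by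
  have hder : ∀ t ∈ Ici x, HasDerivAt (fun t => t ^ a * Real.exp (-t) * h t)
      (-(t ^ (a - 1) * Real.exp (-t) * r t)) t := by
    intro t ht
    have ht0 : 0 < t := hx.trans_le ht
    have h1 := Real.hasDerivAt_rpow_const (x := t) (p := a) (Or.inl ht0.ne')
    have h2 := (hasDerivAt_neg t).exp
    refine ((h1.mul h2).mul (hd t ht0)).congr_deriv ?_
    have e : t ^ a = t ^ (a - 1) * t := by
      rw [← Real.rpow_add_one ht0.ne']; congr 1; ring
    rw [← hr t ht0, Pi.mul_apply, e]
    ring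
  have hneg : ∀ t ∈ Ioi x, -(t ^ (a - 1) * Real.exp (-t) * r t) ≤ 0 := by
    intro t ht
    have ht0 : 0 < t := hx.trans ht
    have := hr0 t ht0
    have : 0 ≤ t ^ (a - 1) * Real.exp (-t) * r t := by positivity
    linarith
  have hlim : Tendsto (fun t => t ^ a * Real.exp (-t) * h t) atTop (𝓝 0) := by
    have h0 : Tendsto (fun t : ℝ => t ^ a) atTop (𝓝 0) := by
      simpa using tendsto_rpow_neg_atTop (y := -a) (by linarith)
    refine tendsto_of_tendsto_of_tendsto_of_le_of_le' tendsto_const_nhds h0 ?_ ?_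
    · filter_upwards [eventually_ge_atTop 1] with t ht
      have := (hb t ht).1
      positivity
    · filter_upwards [eventually_ge_atTop 1] with t ht
      obtain ⟨p, q⟩ := hb t ht
      have he : Real.exp (-t) ≤ 1 := Real.exp_le_one_iff.2 (by linarith)
      have hp : 0 ≤ t ^ a := by positivity
      rw [mul_assoc]
      exact mul_le_of_le_one_right hp (mul_le_one₀ he p q)
  have hi := integrableOn_Ioi_deriv_of_nonpos' hder hneg hlim
  refine ⟨by simpa using hi.neg, ?_⟩
  have := integral_Ioi_of_hasDerivAt_of_tendsto' hder hi hlim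
  rw [integral_neg] at this
  linarith

lemma setIntegral_Ioi_lt {f g : ℝ → ℝ} {x : ℝ} (hf : IntegrableOn f (Ioi x))
    (hg : IntegrableOn g (Ioi x)) (hlt : ∀ t ∈ Ioi x, f t < g t) :
    ∫ t in Ioi x, f t < ∫ t in Ioi x, g t := by
  have hpos : 0 < ∫ t in Ioi x, (g t - f t) := by
    refine (setIntegral_pos_iff_support_of_nonneg_ae ?_ (hg.sub hf)).2 ?_
    rotate_left
    · have : Function.support (g - f) ∩ Ioi x = Ioi x :=
        inter_eq_right.2 fun t ht => (sub_pos.2 (hlt t ht)).ne'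
      rw [this]
      simp
    · filter_upwards [ae_restrict_mem measurableSet_Ioi] with t ht
      exact (sub_pos.2 (hlt t ht)).le
  rw [integral_sub hg hf] at hpos
  linarith

lemma gHi_eq_integral {a x : ℝ} (ha : a < 0) (hx : 0 < x) :
    IntegrableOn (fun t => t ^ (a - 1) * Real.exp (-t) * (1 + t / (t - a) ^ 2)) (Ioi x) ∧
      ∫ t in Ioi x, t ^ (a - 1) * Real.exp (-t) * (1 + t / (t - a) ^ 2) = gHi a x := by
  have key := bound_eq_integral ha hx (fun t => (t - a)⁻¹) (fun t => -1 / (t - a) ^ 2)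
    (fun t => 1 + t / (t - a) ^ 2) ?_ ?_ ?_ ?_
  · rwa [← div_eq_mul_inv] at key
  · intro t ht
    exact ((hasDerivAt_id t).sub_const a).inv (by simp only [id]; linarith)
  · intro t ht
    have : t - a ≠ 0 := by linarith
    field_simp
    ring
  · intro t ht
    positivity
  · intro t ht
    have : 1 ≤ t - a := by linarith
    exact ⟨by positivity, inv_le_one_of_one_le₀ this⟩

lemma incGamma_integrableOn {a x : ℝ} (ha : a < 0) (hx : 0 < x) :
    IntegrableOn (fun t => t ^ (a - 1) * Real.exp (-t)) (Ioi x) := by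
  refine Integrable.mono' (gHi_eq_integral ha hx).1 (by fun_prop) ?_
  filter_upwards [ae_restrict_mem measurableSet_Ioi] with t ht
  have ht0 : 0 < t := hx.trans ht
  rw [Real.norm_of_nonneg (by positivity)]
  exact le_mul_of_one_le_right (by positivity) (le_add_of_nonneg_right (by positivity))

lemma incGamma_lt_gHi {a x : ℝ} (ha : a < 0) (hx : 0 < x) : incGamma a x < gHi a x := by
  rw [← (gHi_eq_integral ha hx).2]
  refine setIntegral_Ioi_lt (incGamma_integrableOn ha hx) (gHi_eq_integral ha hx).1 ?_
  intro t ht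
  have ht0 : 0 < t := hx.trans ht
  have hta : 0 < t - a := by linarith
  exact lt_mul_of_one_lt_right (by positivity) (lt_add_of_pos_right _ (by positivity))

/-- In particular the denominator of `gLo` is positive. -/
lemma two_mul_lt_gLo_denom {a t : ℝ} (ha : a < -1) (ht : 0 < t) : 2 * t < (t - a) ^ 2 + a := by
  nlinarith [mul_pos ht (show 0 < -1 - a by linarith),
    mul_pos (show 0 < -a by linarith) (show 0 < -1 - a by linarith)]

lemma gLo_lt_incGamma {a x : ℝ} (ha : a < -1) (hx : 0 < x) : gLo a x < incGamma a x := by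
  have key := bound_eq_integral (a := a) (by linarith) hx
    (fun t => (t - a - 1) / ((t - a) ^ 2 + a))
    (fun t => (1 * ((t - a) ^ 2 + a) - (t - a - 1) * (2 * (t - a))) / ((t - a) ^ 2 + a) ^ 2)
    (fun t => 1 - 2 * t ^ 2 / ((t - a) ^ 2 + a) ^ 2) ?_ ?_ ?_ ?_
  · rw [← mul_div_assoc] at key
    unfold gLo
    rw [← key.2]
    refine setIntegral_Ioi_lt key.1 (incGamma_integrableOn (by linarith) hx) ?_
    intro t ht
    have ht0 : 0 < t := hx.trans ht
    have hD := two_mul_lt_gLo_denom ha ht0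
    have hD0 : 0 < (t - a) ^ 2 + a := by linarith
    exact mul_lt_of_lt_one_right (by positivity) (sub_lt_self _ (by positivity))
  · intro t ht
    have hD := two_mul_lt_gLo_denom ha ht
    have h1 := (hasDerivAt_id t).sub_const a
    refine ((h1.sub_const 1).div ((h1.pow 2).add_const a) ?_).congr_deriv ?_
    · simp only [Pi.pow_apply, id]; linarith
    · simp
  · intro t ht
    have hD := two_mul_lt_gLo_denom ha ht
    have hD0 : (t - a) ^ 2 + a ≠ 0 := by linarith
    field_simp
    ring
  · intro t ht
    have hD := two_mul_lt_gLo_denom ha ht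
    have hD0 : 0 < (t - a) ^ 2 + a := by linarith
    rw [sub_nonneg, div_le_one (by positivity)]
    nlinarith
  · intro t ht
    have hD := two_mul_lt_gLo_denom ha (by linarith : 0 < t)
    have hD0 : 0 < (t - a) ^ 2 + a := by linarith
    refine ⟨div_nonneg (by linarith) hD0.le, (div_le_one hD0).2 ?_⟩
    nlinarith [mul_nonneg (show 0 ≤ t - 1 by linarith) (show 0 ≤ -1 - a by linarith)]

theorem stmt6 :
    (∀ a : ℝ, a < -1 → ∀ x : ℝ, 0 < x →
      gLo a x < incGamma a x ∧ incGamma a x < gHi a x) ∧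
    (∀ a : ℝ, a < 0 → ∀ x : ℝ, 0 < x →
      incGamma a x < gHi a x ∧ gHi a x = x ^ a * Real.exp (-x) / (x - a)) :=
  ⟨fun _ ha _ hx => ⟨gLo_lt_incGamma ha hx, incGamma_lt_gHi (by linarith) hx⟩,
    fun _ ha _ hx => ⟨incGamma_lt_gHi ha hx, rfl⟩⟩
end

section
/- For each real a < -1, the supremum over x > 0 of the ratio g_a^hi(x)/g_a^lo(x) = ((x−a)^2 + a)/((x−a−1)(x−a)) equals 2/(1 + √(1 + 1/a)), attained at x = √(a(a+1)); consequently, this supremum tends to 1 as a → −∞. -/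
/-!
Put `s = √(1 + 1/a)`, so that `0 < s < 1` and `a s² = a + 1`, and let `y = x - a > 1`. The claimed
bound `(y² + a) / ((y - 1) y) ≤ 2 / (1 + s)` is a quadratic inequality in `y` whose discriminant
vanishes: by `ratio_gap`, `(1 - s) (2 (y - 1) y - (1 + s) (y² + a)) = ((1 - s) y - 1)²`.
Equality holds exactly at `y = 1 / (1 - s) = -a (1 + s)`, that is, at `x = -a s = √(a (a + 1))`.
-/

open Real Filter Set

/-- The gap in the cross-multiplied inequality is a perfect square. -/
lemma ratio_gap {a s : ℝ} (hs : a * s ^ 2 = a + 1) (y : ℝ) :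
    (1 - s) * (2 * ((y - 1) * y) - (y ^ 2 + a) * (1 + s)) = ((1 - s) * y - 1) ^ 2 := by
  linear_combination hs

/-- The maximizer in terms of `s = √(1 + 1/a)`. -/
lemma sqrt_maximizer {a s : ℝ} (ha : a < -1) (hs0 : 0 < s) (hs : a * s ^ 2 = a + 1) :
    √(a * (a + 1)) = -a * s := by
  rw [show a * (a + 1) = (-a * s) ^ 2 by rw [← hs]; ring]
  exact Real.sqrt_sq (by nlinarith)

theorem stmt8 :
    (∀ a : ℝ, a < -1 →
      (∀ x : ℝ, 0 < x →
        gHi a x / gLo a x = ((x - a) ^ 2 + a) / ((x - a - 1) * (x - a))) ∧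
      IsGreatest ((fun x : ℝ => ((x - a) ^ 2 + a) / ((x - a - 1) * (x - a))) '' Set.Ioi 0)
        (2 / (1 + Real.sqrt (1 + 1 / a))) ∧
      ((Real.sqrt (a * (a + 1)) - a) ^ 2 + a) /
          ((Real.sqrt (a * (a + 1)) - a - 1) * (Real.sqrt (a * (a + 1)) - a)) =
        2 / (1 + Real.sqrt (1 + 1 / a))) ∧
    Filter.Tendsto (fun a : ℝ => 2 / (1 + Real.sqrt (1 + 1 / a))) Filter.atBot (nhds 1) := by
  refine ⟨fun a ha => ?_, ?_⟩
  · have hpos : 0 < 1 + 1 / a := by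
      have h : 1 + 1 / a = (a + 1) / a := by field_simp [show a ≠ 0 by linarith]
      rw [h]
      exact div_pos_of_neg_of_neg (by linarith) (by linarith)
    have hs0 : 0 < √(1 + 1 / a) := Real.sqrt_pos.2 hpos
    have hs : a * √(1 + 1 / a) ^ 2 = a + 1 := by
      rw [Real.sq_sqrt hpos.le]
      field_simp [show a ≠ 0 by linarith]
    generalize √(1 + 1 / a) = s at hs0 hs
    have hs1 : s < 1 := by
      by_contra! h
      nlinarith [one_le_pow₀ (n := 2) h]
    have hmax := sqrt_maximizer ha hs0 hs
    have hxpos : 0 < √(a * (a + 1)) := by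
      rw [hmax]
      exact mul_pos (by linarith) hs0
    have hval : ((√(a * (a + 1)) - a) ^ 2 + a) /
        ((√(a * (a + 1)) - a - 1) * (√(a * (a + 1)) - a)) = 2 / (1 + s) := by
      have hne : (√(a * (a + 1)) - a - 1) * (√(a * (a + 1)) - a) ≠ 0 :=
        (mul_pos (by linarith) (by linarith)).ne'
      rw [div_eq_div_iff hne (by linarith)]
      have hgap := ratio_gap hs (√(a * (a + 1)) - a)
      have hzero : (1 - s) * (√(a * (a + 1)) - a) - 1 = 0 := by
        rw [hmax]
        linear_combination hs
      rw [hzero, zero_pow two_ne_zero] at hgap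
      rcases mul_eq_zero.1 hgap with h | h <;> linarith
    refine ⟨fun x hx => ?_, ⟨⟨_, hxpos, hval⟩, ?_⟩, hval⟩
    · have h1 : x ^ a * Real.exp (-x) ≠ 0 := by positivity
      have h2 : x - a ≠ 0 := by linarith
      have h3 : x - a - 1 ≠ 0 := by linarith
      have h4 : (x - a) ^ 2 + a ≠ 0 := by nlinarith
      unfold gHi gLo
      generalize x ^ a * Real.exp (-x) = c at h1
      rw [div_div_div_eq, div_eq_div_iff (by positivity) (by positivity)]
      ring
    · rintro _ ⟨x, hx, rfl⟩
      have hx0 : 0 < x := hx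
      have hden : 0 < (x - a - 1) * (x - a) := mul_pos (by linarith) (by linarith)
      change ((x - a) ^ 2 + a) / ((x - a - 1) * (x - a)) ≤ 2 / (1 + s)
      rw [div_le_div_iff₀ hden (by linarith)]
      have hgap := ratio_gap hs (x - a)
      have hsq := sq_nonneg ((1 - s) * (x - a) - 1)
      rw [← hgap] at hsq
      linarith [nonneg_of_mul_nonneg_right hsq (sub_pos.2 hs1)]
  · have h : Tendsto (fun a : ℝ => 1 + 1 / a) atBot (nhds 1) := by
      simpa using (tendsto_inv_atBot_zero (𝕜 := ℝ)).const_add 1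
    have h2 := h.sqrt
    rw [Real.sqrt_one] at h2
    have h3 := (tendsto_const_nhds (x := (2 : ℝ))).div (h2.const_add 1) (by norm_num)
    rwa [show (2 : ℝ) / (1 + 1) = 1 by norm_num] at h3
end

section
/- Let a be a real number with a ≥ 1. Then Γ(a,x) ≥ x^(a−1) e^(−x) for all real x > 0, and Γ(a,x) ≤ x^(a−1) e^(−x)/(1 − (a−1)/x) for all real x > a−1. -/
/-!
Both bounds come from comparing `t ^ (a - 1)` on `(x, ∞)` with a function that integrates
explicitly against `exp (-t)`. Below, `t ^ (a - 1) ≥ x ^ (a - 1)` by monotonicity. Above,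
`t / x ≤ exp (t / x - 1)` gives `t ^ (a - 1) ≤ x ^ (a - 1) * exp ((a - 1) * (t / x - 1))`, and the
resulting exponential has rate `-(1 - (a - 1) / x)`, which is negative exactly when `x > a - 1`.
-/

open Real Filter Set

theorem integrableOn_incGamma {a x : ℝ} (ha : 1 ≤ a) (hx : 0 < x) :
    MeasureTheory.IntegrableOn (fun t : ℝ => t ^ (a - 1) * Real.exp (-t)) (Set.Ioi x) := by
  refine ((Real.GammaIntegral_convergent (s := a) (by linarith)).mono_set
    (Set.Ioi_subset_Ioi hx.le)).congr_fun (fun t _ => mul_comm _ _) measurableSet_Ioi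

/-- The tangent-line bound `log (t / x) ≤ t / x - 1`, in exponentiated form. -/
theorem rpow_le_rpow_mul_exp {s x t : ℝ} (hs : 0 ≤ s) (hx : 0 < x) (ht : 0 < t) :
    t ^ s ≤ x ^ s * Real.exp (s * (t / x - 1)) := by
  have h : t ≤ x * Real.exp (t / x - 1) := by
    have h1 := Real.add_one_le_exp (t / x - 1)
    calc t = x * (t / x - 1 + 1) := by field_simp; ring
      _ ≤ _ := by gcongr
  calc t ^ s ≤ (x * Real.exp (t / x - 1)) ^ s := Real.rpow_le_rpow ht.le h hs
    _ = _ := by rw [Real.mul_rpow hx.le (Real.exp_pos _).le, ← Real.exp_mul, mul_comm s]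

theorem stmt12 (a : ℝ) (ha : 1 ≤ a) :
    (∀ x : ℝ, 0 < x → x ^ (a - 1) * Real.exp (-x) ≤ incGamma a x) ∧
    (∀ x : ℝ, a - 1 < x →
      incGamma a x ≤ x ^ (a - 1) * Real.exp (-x) / (1 - (a - 1) / x)) := by
  refine ⟨fun x hx => ?_, fun x hx => ?_⟩
  · unfold incGamma
    rw [← integral_exp_neg_Ioi x, ← MeasureTheory.integral_const_mul]
    refine MeasureTheory.setIntegral_mono_on ((integrableOn_exp_neg_Ioi x).const_mul _)
      (integrableOn_incGamma ha hx) measurableSet_Ioi fun t ht => ?_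
    have ht' : x < t := ht
    exact mul_le_mul_of_nonneg_right (Real.rpow_le_rpow hx.le ht'.le (by linarith))
      (Real.exp_pos _).le
  · have hx0 : 0 < x := by linarith
    have hc : 0 < 1 - (a - 1) / x := by
      rw [sub_pos, div_lt_one hx0]; exact hx
    set c := 1 - (a - 1) / x with hcdef
    have hcx : c * x = x - (a - 1) := by rw [hcdef]; field_simp
    have hneg : -c < 0 := by linarith
    have hval : x ^ (a - 1) * Real.exp (-x) / c =
        ∫ t in Set.Ioi x, x ^ (a - 1) * Real.exp (-(a - 1)) * Real.exp (-c * t) := by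
      rw [MeasureTheory.integral_const_mul, integral_exp_mul_Ioi hneg, neg_div_neg_eq,
        mul_div_assoc', mul_assoc, ← Real.exp_add]
      congr 3
      linarith
    rw [hval]
    unfold incGamma
    refine MeasureTheory.setIntegral_mono_on (integrableOn_incGamma ha hx0)
      ((integrableOn_exp_mul_Ioi hneg x).const_mul _) measurableSet_Ioi fun t ht => ?_
    have ht0 : 0 < t := hx0.trans ht
    calc t ^ (a - 1) * Real.exp (-t)
        ≤ x ^ (a - 1) * Real.exp ((a - 1) * (t / x - 1)) * Real.exp (-t) := by
          gcongr
          exact rpow_le_rpow_mul_exp (by linarith) hx0 ht0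
      _ = _ := by
          rw [mul_assoc, mul_assoc, ← Real.exp_add, ← Real.exp_add]
          congr 2
          rw [hcdef]
          ring
end

section
/- Let a be a real number with a < 1. Then for every real x > 0, Γ(a,x) > e^(−x) x^a (x + 3 − a)/(x² + (4 − 2a)x + (a−1)(a−2)). Moreover, this lower bound is exact at infinity: the ratio of the bound to Γ(a,x) tends to 1 as x → ∞. -/
/-!
Write `D(x) = x² + (4 - 2a)x + (a-1)(a-2)` and `B(x) = e^(-x) x^a (x + 3 - a) / D(x)` for the bound.
A polynomial identity gives

  `B'(x) = -x^(a-1) e^(-x) (1 - 2(1-a)(2-a) / D(x)²)`,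

and `B` vanishes at infinity, so `B(x) = ∫_x^∞ t^(a-1) e^(-t) (1 - 2(1-a)(2-a) / D(t)²) dt`.
For `a < 1` this integrand is strictly below that of `Γ(a,x)`, which is the inequality
(`bound_lt_incGamma`).

For the limit, `t^(a-1)` is decreasing, so `Γ(a,x) ≤ x^(a-1) e^(-x)`; hence the ratio lies between
`x (x + 3 - a) / D(x)`, which tends to `1`, and `1`.
-/

open Real Filter Set

lemma den_pos {a x : ℝ} (ha : a < 1) (hx : 0 < x) :
    0 < x ^ 2 + (4 - 2 * a) * x + (a - 1) * (a - 2) := by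
  have h1 : 0 < (4 - 2 * a) * x := mul_pos (by linarith) hx
  have h2 : 0 < (a - 1) * (a - 2) := mul_pos_of_neg_of_neg (by linarith) (by linarith)
  positivity

lemma bound_hasDerivAt {a x : ℝ} (ha : a < 1) (hx : 0 < x) :
    HasDerivAt (fun x : ℝ => Real.exp (-x) * x ^ a * (x + 3 - a) /
        (x ^ 2 + (4 - 2 * a) * x + (a - 1) * (a - 2)))
      (-(x ^ (a - 1) * Real.exp (-x) * (1 - 2 * ((a - 1) * (a - 2)) /
        (x ^ 2 + (4 - 2 * a) * x + (a - 1) * (a - 2)) ^ 2))) x := by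
  have hD := (den_pos ha hx).ne'
  have h1 : HasDerivAt (fun x : ℝ => Real.exp (-x)) (Real.exp (-x) * (-1)) x :=
    (hasDerivAt_neg x).exp
  have h2 : HasDerivAt (fun x : ℝ => x ^ a) (a * x ^ (a - 1)) x :=
    Real.hasDerivAt_rpow_const (Or.inl hx.ne')
  have h3 : HasDerivAt (fun x : ℝ => x + 3 - a) 1 x :=
    ((hasDerivAt_id x).add_const 3).sub_const a
  have h4 : HasDerivAt (fun x : ℝ => x ^ 2 + (4 - 2 * a) * x + (a - 1) * (a - 2))
      (2 * x + (4 - 2 * a)) x := by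
    have := (((hasDerivAt_id x).pow 2).add ((hasDerivAt_id x).const_mul (4 - 2 * a))).add_const
      ((a - 1) * (a - 2))
    refine this.congr_deriv ?_
    simp
  refine (((h1.mul h2).mul h3).div h4 hD).congr_deriv ?_
  have hxa : x ^ a = x ^ (a - 1) * x := by
    rw [← Real.rpow_add_one hx.ne']; simp
  simp only [Pi.mul_apply]
  rw [hxa]
  generalize x ^ (a - 1) = p
  generalize Real.exp (-x) = e
  rw [one_sub_div (pow_ne_zero 2 hD), ← mul_div_assoc, ← neg_div]
  congr 1
  ring

/-- Holds because `x (x + 3 - a) ≤ D(x)`, where `D` is the denominator of the bound. -/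
lemma bound_le {a x : ℝ} (ha : a < 1) (hx : 0 < x) :
    Real.exp (-x) * x ^ a * (x + 3 - a) / (x ^ 2 + (4 - 2 * a) * x + (a - 1) * (a - 2))
      ≤ x ^ (a - 1) * Real.exp (-x) := by
  have hxa : x ^ a = x ^ (a - 1) * x := by
    rw [← Real.rpow_add_one hx.ne']; simp
  rw [div_le_iff₀ (den_pos ha hx), hxa]
  have h2 : 0 < (a - 1) * (a - 2) := mul_pos_of_neg_of_neg (by linarith) (by linarith)
  have h3 : 0 < (1 - a) * x := mul_pos (by linarith) hx
  have : 0 ≤ x ^ (a - 1) * Real.exp (-x) := by positivity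
  calc _ = x ^ (a - 1) * Real.exp (-x) * (x * (x + 3 - a)) := by ring
    _ ≤ _ := mul_le_mul_of_nonneg_left (by nlinarith) this

lemma rpow_mul_exp_neg_le {a x t : ℝ} (ha : a < 1) (hx : 0 < x) (ht : x < t) :
    t ^ (a - 1) * Real.exp (-t) ≤ x ^ (a - 1) * Real.exp (-t) :=
  mul_le_mul_of_nonneg_right (Real.rpow_le_rpow_of_nonpos hx ht.le (by linarith))
    (Real.exp_pos _).le

lemma integrableOn_integrand {a x : ℝ} (ha : a < 1) (hx : 0 < x) :
    MeasureTheory.IntegrableOn (fun t : ℝ => t ^ (a - 1) * Real.exp (-t)) (Set.Ioi x) := by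
  refine MeasureTheory.Integrable.mono' ((integrableOn_exp_neg_Ioi x).const_mul (x ^ (a - 1)))
    (by fun_prop) ?_
  refine (MeasureTheory.ae_restrict_iff' measurableSet_Ioi).2 (.of_forall fun t ht => ?_)
  have ht0 : 0 < t := hx.trans ht
  rw [Real.norm_of_nonneg (by positivity)]
  exact rpow_mul_exp_neg_le ha hx ht

lemma incGamma_le {a x : ℝ} (ha : a < 1) (hx : 0 < x) :
    incGamma a x ≤ x ^ (a - 1) * Real.exp (-x) := by
  unfold incGamma
  rw [← integral_exp_neg_Ioi x, ← MeasureTheory.integral_const_mul]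
  exact MeasureTheory.setIntegral_mono_on (integrableOn_integrand ha hx)
    ((integrableOn_exp_neg_Ioi x).const_mul _) measurableSet_Ioi
    fun t ht => rpow_mul_exp_neg_le ha hx ht

lemma bound_tendsto_zero {a : ℝ} (ha : a < 1) :
    Tendsto (fun x : ℝ => Real.exp (-x) * x ^ a * (x + 3 - a) /
        (x ^ 2 + (4 - 2 * a) * x + (a - 1) * (a - 2))) atTop (nhds 0) := by
  have h := tendsto_rpow_mul_exp_neg_mul_atTop_nhds_zero (a - 1) 1 one_pos
  simp only [neg_mul, one_mul] at h
  refine squeeze_zero' ?_ ?_ h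
  · filter_upwards [eventually_gt_atTop 0] with x hx
    have := den_pos ha hx
    have : 0 < x + 3 - a := by linarith
    positivity
  · filter_upwards [eventually_gt_atTop 0] with x hx using bound_le ha hx

lemma bound_lt_incGamma {a x : ℝ} (ha : a < 1) (hx : 0 < x) :
    Real.exp (-x) * x ^ a * (x + 3 - a) / (x ^ 2 + (4 - 2 * a) * x + (a - 1) * (a - 2))
      < incGamma a x := by
  have hc : 0 < (a - 1) * (a - 2) := mul_pos_of_neg_of_neg (by linarith) (by linarith)
  have hf := integrableOn_integrand ha hx
  -- The defect between the two integrands is integrable because `D(t) ≥ (a-1)(a-2)`.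
  have hg : MeasureTheory.IntegrableOn (fun t : ℝ => t ^ (a - 1) * Real.exp (-t) *
      (2 * ((a - 1) * (a - 2)) /
        (t ^ 2 + (4 - 2 * a) * t + (a - 1) * (a - 2)) ^ 2)) (Set.Ioi x) := by
    refine MeasureTheory.Integrable.mono'
      (hf.mul_const (2 * ((a - 1) * (a - 2)) / ((a - 1) * (a - 2)) ^ 2))
      (Measurable.aestronglyMeasurable (by fun_prop)) ?_
    refine (MeasureTheory.ae_restrict_iff' measurableSet_Ioi).2 (.of_forall fun t ht => ?_)
    have ht0 : 0 < t := hx.trans ht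
    have hD := den_pos ha ht0
    have h1 : 0 < (4 - 2 * a) * t := mul_pos (by linarith) ht0
    rw [Real.norm_of_nonneg (by positivity)]
    gcongr
    nlinarith
  have hB := MeasureTheory.integral_Ioi_of_hasDerivAt_of_tendsto'
    (fun t (ht : t ∈ Set.Ici x) => bound_hasDerivAt ha (hx.trans_le ht))
    ((hg.sub hf).congr_fun (fun t _ => by simp only [Pi.sub_apply]; ring) measurableSet_Ioi)
    (bound_tendsto_zero ha)
  have hpos : 0 < ∫ t in Set.Ioi x, t ^ (a - 1) * Real.exp (-t) *
      (2 * ((a - 1) * (a - 2)) / (t ^ 2 + (4 - 2 * a) * t + (a - 1) * (a - 2)) ^ 2) := by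
    have hp : ∀ t ∈ Set.Ioi x, 0 < t ^ (a - 1) * Real.exp (-t) *
      (2 * ((a - 1) * (a - 2)) / (t ^ 2 + (4 - 2 * a) * t + (a - 1) * (a - 2)) ^ 2) := by
      intro t ht
      have ht0 : 0 < t := hx.trans ht
      have hD := den_pos ha ht0
      positivity
    rw [MeasureTheory.setIntegral_pos_iff_support_of_nonneg_ae
      ((MeasureTheory.ae_restrict_iff' measurableSet_Ioi).2
        (.of_forall fun t ht => (hp t ht).le)) hg]
    rw [Set.inter_eq_right.2 fun t ht => Function.mem_support.2 (hp t ht).ne']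
    simp
  have hsplit := MeasureTheory.integral_sub hg hf
  have hcongr : ∫ t in Set.Ioi x, (t ^ (a - 1) * Real.exp (-t) *
      (2 * ((a - 1) * (a - 2)) / (t ^ 2 + (4 - 2 * a) * t + (a - 1) * (a - 2)) ^ 2)
        - t ^ (a - 1) * Real.exp (-t)) =
      ∫ t in Set.Ioi x, -(t ^ (a - 1) * Real.exp (-t) * (1 - 2 * ((a - 1) * (a - 2)) /
        (t ^ 2 + (4 - 2 * a) * t + (a - 1) * (a - 2)) ^ 2)) := by
    congr 1; ext t; ring
  unfold incGamma
  linarith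

lemma ratio_tendsto_one (a : ℝ) :
    Tendsto (fun x : ℝ => x * (x + 3 - a) / (x ^ 2 + (4 - 2 * a) * x + (a - 1) * (a - 2)))
      atTop (nhds 1) := by
  have hi : Tendsto (fun x : ℝ => x⁻¹) atTop (nhds 0) := tendsto_inv_atTop_zero
  have h : Tendsto (fun x : ℝ => (1 + (3 - a) * x⁻¹) /
      (1 + (4 - 2 * a) * x⁻¹ + (a - 1) * (a - 2) * x⁻¹ ^ 2)) atTop
      (nhds ((1 + (3 - a) * 0) / (1 + (4 - 2 * a) * 0 + (a - 1) * (a - 2) * 0 ^ 2))) :=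
    ((hi.const_mul _).const_add _).div
      (((hi.const_mul _).const_add _).add ((hi.pow 2).const_mul _)) (by norm_num)
  have he : (1 + (3 - a) * 0) / (1 + (4 - 2 * a) * 0 + (a - 1) * (a - 2) * 0 ^ 2) = (1 : ℝ) := by
    norm_num
  rw [he] at h
  refine h.congr' ?_
  filter_upwards [eventually_gt_atTop 0] with x hx
  rw [← mul_div_mul_left _ _ (pow_pos hx 2).ne']
  congr 1 <;> field_simp
  ring

theorem stmt13 (a : ℝ) (ha : a < 1) :
    (∀ x : ℝ, 0 < x →
      Real.exp (-x) * x ^ a * (x + 3 - a) / (x ^ 2 + (4 - 2 * a) * x + (a - 1) * (a - 2))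
        < incGamma a x) ∧
    Filter.Tendsto
      (fun x : ℝ =>
        Real.exp (-x) * x ^ a * (x + 3 - a) / (x ^ 2 + (4 - 2 * a) * x + (a - 1) * (a - 2)) /
          incGamma a x)
      Filter.atTop (nhds 1) := by
  refine ⟨fun x hx => bound_lt_incGamma ha hx, ?_⟩
  have hBpos : ∀ x : ℝ, 0 < x → 0 < Real.exp (-x) * x ^ a * (x + 3 - a) /
      (x ^ 2 + (4 - 2 * a) * x + (a - 1) * (a - 2)) := by
    intro x hx
    have := den_pos ha hx
    have : 0 < x + 3 - a := by linarith
    positivity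
  refine tendsto_of_tendsto_of_tendsto_of_le_of_le' (ratio_tendsto_one a) tendsto_const_nhds ?_ ?_
  · filter_upwards [eventually_gt_atTop 0] with x hx
    have hG := (hBpos x hx).trans (bound_lt_incGamma ha hx)
    have hD := den_pos ha hx
    have hxa : x ^ a = x ^ (a - 1) * x := by
      rw [← Real.rpow_add_one hx.ne']; simp
    have hq : 0 ≤ x * (x + 3 - a) / (x ^ 2 + (4 - 2 * a) * x + (a - 1) * (a - 2)) :=
      div_nonneg (mul_nonneg hx.le (by linarith)) hD.le
    rw [le_div_iff₀ hG]
    refine (mul_le_mul_of_nonneg_left (incGamma_le ha hx) hq).trans_eq ?_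
    rw [hxa]
    ring
  · filter_upwards [eventually_gt_atTop 0] with x hx
    have hlt := bound_lt_incGamma ha hx
    exact (div_le_one ((hBpos x hx).trans hlt)).2 hlt.le
end
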